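/- Let r ∈ ℕ with r ≥ 2 or r = ∞, and let f be a volume-preserving C^r diffeomorphism of T², isotopic to the identity, regularly semi-conjugate to T_ω̄ with ω̄ totally irrational and super-Liouvillean. If g is a volume-preserving C^{r−1} diffeomorphism of T², isotopic to the identity, commuting with f and with rotation vector ρ(g) = 0 in ℝ²/ℤ², then g = Id_{T²}. -/

import Mathlib

open Filter Topology MeasureTheory

noncomputable section

/-- The plane ℝ². -/
abbrev R2 : Type := ℝ × ℝ

/-- The Euclidean norm on ℝ². -/
def enorm2 (v : R2) : ℝ := Real.sqrt (v.1 ^ 2 + v.2 ^ 2)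

/-- The two-torus 𝕋² = ℝ²/ℤ². -/
abbrev T2 : Type := AddCircle (1 : ℝ) × AddCircle (1 : ℝ)

/-- The covering projection π : ℝ² → 𝕋². -/
def pr2 (v : R2) : T2 := ((v.1 : AddCircle (1 : ℝ)), (v.2 : AddCircle (1 : ℝ)))

/-- The integer vector (v₁, v₂) regarded as a point of ℝ². -/
def intVec (v : ℤ × ℤ) : R2 := ((v.1 : ℝ), (v.2 : ℝ))

/-- The distance on 𝕋² induced by the Euclidean metric on ℝ². -/
def distT2 (x y : T2) : ℝ :=
  sInf {r | ∃ a b : R2, pr2 a = x ∧ pr2 b = y ∧ r = enorm2 (a - b)}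

/-- The C⁰ distance between two maps of 𝕋². -/
def dC0 (f g : T2 → T2) : ℝ := ⨆ x : T2, distT2 (f x) (g x)

/-- `F : ℝ² → ℝ²` is a lift of `f : 𝕋² → 𝕋²`, i.e. π ∘ F = f ∘ π. -/
def IsLift (F : R2 → R2) (f : T2 → T2) : Prop := ∀ z : R2, pr2 (F z) = f (pr2 z)

/-- `F` commutes with the deck transformations of π : ℝ² → 𝕋². -/
def Equivariant (F : R2 → R2) : Prop :=
  ∀ (z : R2) (v : ℤ × ℤ), F (z + intVec v) = F z + intVec v

/-- `f` is a homeomorphism of 𝕋² isotopic to the identity (equivalently, admitting an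
equivariant lift to ℝ²). -/
def IsotopicToId (f : T2 → T2) : Prop :=
  IsHomeomorph f ∧ ∃ F : R2 → R2, IsHomeomorph F ∧ IsLift F f ∧ Equivariant F

/-- The Misiurewicz–Ziemian rotation set of a lift `F`. -/
def rotSet (F : R2 → R2) : Set R2 :=
  {v | ∃ (z : ℕ → R2) (n : ℕ → ℕ), Tendsto n atTop atTop ∧
      Tendsto (fun i => ((n i : ℝ))⁻¹ • (F^[n i] (z i) - z i)) atTop (𝓝 v)}

/-- Bounded mean motion, with bound κ, for a lift `F` with rotation vector `ω`:
‖Fⁿ(z) − z − nω‖ ≤ κ for all z and n. -/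
def BoundedMeanMotion (F : R2 → R2) (ω : R2) (κ : ℝ) : Prop :=
  ∀ (z : R2) (n : ℕ), enorm2 (F^[n] z - z - (n : ℝ) • ω) ≤ κ

/-- The standard scalar product on ℝ². -/
def inner2 (u v : R2) : ℝ := u.1 * v.1 + u.2 * v.2

/-- v^⊥ = (−v₂, v₁)/‖v‖. -/
def perp2 (v : R2) : R2 := (-v.2 / enorm2 v, v.1 / enorm2 v)

/-- Bounded deviation parallel to `v`, with bound κ, for a lift `F` with rotation vector `ω`:
|⟨Fⁿ(z) − z − nω, v^⊥⟩| ≤ κ for all z and n. -/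
def BoundedDeviation (F : R2 → R2) (ω : R2) (v : R2) (κ : ℝ) : Prop :=
  ∀ (z : R2) (n : ℕ), |inner2 (F^[n] z - z - (n : ℝ) • ω) (perp2 v)| ≤ κ

/-- ‖ω‖_{𝕋²} = min over integer vectors z of ‖ω − z‖. -/
def normT2 (ω : R2) : ℝ := ⨅ v : ℤ × ℤ, enorm2 (ω - intVec v)

/-- The super-Liouvillean condition: liminf_{n→∞} n⁻¹ ln ‖nω‖_{𝕋²} = −∞. -/
def SuperLiouville (ω : R2) : Prop :=
  ∀ M : ℝ, ∃ᶠ n : ℕ in atTop, (n : ℝ)⁻¹ * Real.log (normT2 ((n : ℝ) • ω)) < M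

/-- The strong super-Liouvillean condition: liminf_{n→∞} n⁻¹ aⁿ ln ‖nω‖_{𝕋²} = −∞. -/
def StrongSuperLiouville (a : ℝ) (ω : R2) : Prop :=
  ∀ M : ℝ, ∃ᶠ n : ℕ in atTop, (n : ℝ)⁻¹ * a ^ n * Real.log (normT2 ((n : ℝ) • ω)) < M

/-- ω ∈ ℝ² is irrational if ω ∉ ℚ². -/
def IrrationalVec (ω : R2) : Prop := ¬ ∃ q : ℚ × ℚ, ω = ((q.1 : ℝ), (q.2 : ℝ))

/-- ω is totally irrational if ω₁, ω₂, 1 are rationally independent. -/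
def TotallyIrrationalVec (ω : R2) : Prop :=
  ∀ d1 d2 e : ℤ, (d1 : ℝ) * ω.1 + (d2 : ℝ) * ω.2 + (e : ℝ) = 0 → d1 = 0 ∧ d2 = 0 ∧ e = 0

/-- ω is semi-irrational: irrational but not totally irrational. -/
def SemiIrrationalVec (ω : R2) : Prop := IrrationalVec ω ∧ ¬ TotallyIrrationalVec ω

/-- `v` is a character vector of the semi-irrational vector ω. -/
def IsCharacterVector (ω : R2) (v : R2) : Prop :=
  ∃ c d : ℤ, Int.gcd c d = 1 ∧ (∃ e : ℚ, (c : ℝ) * ω.1 + (d : ℝ) * ω.2 + (e : ℝ) = 0) ∧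
    v = ((d : ℝ), (-c : ℝ))

/-- `f` is Hölder continuous with exponent `a`. -/
def HolderMap (a : ℝ) (f : T2 → T2) : Prop :=
  ∃ C : ℝ, ∀ x y : T2, distT2 (f x) (f y) ≤ C * distT2 x y ^ a

/-- C⁰-rigidity: liminf_{n→∞} d_{C⁰}(fⁿ, Id) = 0. -/
def C0Rigid (f : T2 → T2) : Prop :=
  ∀ ε : ℝ, 0 < ε → ∃ᶠ n : ℕ in atTop, dC0 (f^[n]) id < ε

/-- `f` is a C^r diffeomorphism of 𝕋², expressed via a C^r lift with a C^r inverse. -/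
def IsCrDiffeo (r : ℕ∞) (f : T2 → T2) : Prop :=
  ∃ F G : R2 → R2, IsLift F f ∧ Function.LeftInverse G F ∧ Function.RightInverse G F ∧
    ContDiff ℝ r F ∧ ContDiff ℝ r G

/-- C^k-rigidity: some sequence of iterates f^{n_j}, n_j → ∞, converges to the identity in the
C^k topology, i.e. admits lifts converging to the identity uniformly together with all
derivatives of order ≤ k. -/
def CkRigid (k : ℕ∞) (f : T2 → T2) : Prop :=
  ∃ n : ℕ → ℕ, Tendsto n atTop atTop ∧
    ∃ F : ℕ → R2 → R2, (∀ j, IsLift (F j) (f^[n j])) ∧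
      ∀ i : ℕ, (i : ℕ∞) ≤ k →
        Tendsto (fun j => ⨆ z : R2, ‖iteratedFDeriv ℝ i (fun w => F j w - w) z‖)
          atTop (𝓝 0)

/-- ‖x‖_𝕋 : the distance from x ∈ ℝ to the nearest integer. -/
def dT (x : ℝ) : ℝ := |x - round x|

/-- `q` is the sequence of denominators of the best rational approximations of β. -/
def BestDenomSeq (β : ℝ) (q : ℕ → ℕ) : Prop :=
  q 0 = 1 ∧ ∀ n : ℕ,
    q n < q (n + 1) ∧
    (∀ m : ℕ, 1 ≤ m → m < q (n + 1) → dT ((q n : ℝ) * β) ≤ dT ((m : ℝ) * β)) ∧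
    dT ((q n : ℝ) * β) < 1 / (q (n + 1) : ℝ)

/-- β is of non-Brjuno type: Σ_n (ln q_{n+1})/q_n = ∞. -/
def NonBrjunoNum (β : ℝ) : Prop :=
  ∀ q : ℕ → ℕ, BestDenomSeq β q → ¬ Summable fun n => Real.log (q (n + 1) : ℝ) / (q n : ℝ)

/-- Character data of a semi-irrational vector ω: (c,d) ∈ ℤ² with gcd(c,d)=1 and
e = p/q ∈ ℚ in lowest terms with q > 0 such that c ω₁ + d ω₂ + p/q = 0. -/
def IsCharData (ω : R2) (c d p q : ℤ) : Prop :=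
  Int.gcd c d = 1 ∧ Int.gcd p q = 1 ∧ 0 < q ∧
    (c : ℝ) * ω.1 + (d : ℝ) * ω.2 + (p : ℝ) / (q : ℝ) = 0

/-- ω is of strong non-Brjuno type: its character frequency 𝓕(ω̄) is of non-Brjuno type. -/
def StrongNonBrjuno (ω : R2) : Prop :=
  ∃ c d p q a b : ℤ, IsCharData ω c d p q ∧ a * d - b * c = 1 ∧
    NonBrjunoNum (dT ((q : ℝ) * ((a : ℝ) * ω.1 + (b : ℝ) * ω.2)))

/-- The linear action of the integer matrix [[a,b],[c,d]] on ℝ². -/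
def AactZ (a b c d : ℤ) (z : R2) : R2 :=
  ((a : ℝ) * z.1 + (b : ℝ) * z.2, (c : ℝ) * z.1 + (d : ℝ) * z.2)

/-- The operator norm (w.r.t. the Euclidean norm) of the matrix [[a,b],[c,d]]. -/
def AOpNormZ (a b c d : ℤ) : ℝ :=
  sSup {r | ∃ u : R2, enorm2 u ≤ 1 ∧
    r = enorm2 ((a : ℝ) * u.1 + (b : ℝ) * u.2, (c : ℝ) * u.1 + (d : ℝ) * u.2)}

/-- Membership in the class 𝒞_{κ,ω̄}: pseudo-rotations with rotation vector ω̄ mod ℤ²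
having bounded mean motion with bound κ. -/
def MemC (κ : ℝ) (w : T2) (f : T2 → T2) : Prop :=
  IsotopicToId f ∧ ∃ (F : R2 → R2) (ω : R2),
    IsLift F f ∧ rotSet F = {ω} ∧ pr2 ω = w ∧ BoundedMeanMotion F ω κ

/-- Membership in the class 𝒟_{κ,ω̄,v}: pseudo-rotations with rotation vector ω̄ mod ℤ²
having bounded deviation parallel to v with bound κ. -/
def MemD (κ : ℝ) (w : T2) (v : R2) (f : T2 → T2) : Prop :=
  IsotopicToId f ∧ ∃ (F : R2 → R2) (ω : R2),
    IsLift F f ∧ rotSet F = {ω} ∧ pr2 ω = w ∧ BoundedDeviation F ω v κ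

/-- `h : 𝕋² → 𝕋²` is homotopic to the identity (characterised by admitting an equivariant
continuous lift). -/
def HomotopicToIdMap (h : T2 → T2) : Prop :=
  ∃ H : R2 → R2, Continuous H ∧ IsLift H h ∧ Equivariant H

/-- `f` is regularly semi-conjugate to the translation T_w : x ↦ x + w, i.e. semi-conjugate via
a continuous surjection homotopic to the identity. -/
def RegSemiConj (f : T2 → T2) (w : T2) : Prop :=
  ∃ h : T2 → T2, Continuous h ∧ Function.Surjective h ∧ HomotopicToIdMap h ∧
    ∀ x : T2, h (f x) = h x + w

/-- `f` is topologically conjugate to a translation of 𝕋². -/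
def TopLinearizable (f : T2 → T2) : Prop :=
  ∃ (w : T2) (h : T2 → T2), IsHomeomorph h ∧ ∀ x : T2, h (f x) = h x + w

/-- `f` is minimal: every orbit is dense. -/
def MinimalMap (f : T2 → T2) : Prop :=
  ∀ x : T2, Dense (Set.range fun n : ℕ => f^[n] x)

/-- The open ball in 𝕋² for the Euclidean-induced distance. -/
def ballT2 (z : T2) (r : ℝ) : Set T2 := {y | distT2 z y < r}

/-- The diameter of a subset of 𝕋² for the Euclidean-induced distance. -/
def diamT2 (S : Set T2) : ℝ := sSup {r | ∃ x ∈ S, ∃ y ∈ S, r = distT2 x y}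

/-- The Euclidean diameter of a subset of ℝ². -/
def diamE (S : Set R2) : ℝ := sSup {r | ∃ x ∈ S, ∃ y ∈ S, r = enorm2 (x - y)}

/-- `F` is a bounded (measurable) fundamental domain for the ℤ²-action on ℝ². -/
def IsBoundedFundDom (F : Set R2) : Prop :=
  MeasurableSet F ∧ Bornology.IsBounded F ∧
    (∀ x : R2, ∃ v : ℤ × ℤ, x - intVec v ∈ F) ∧
    ∀ v : ℤ × ℤ, v ≠ 0 → F ∩ ((fun x => x + intVec v) '' F) = ∅

/-- `D` is an open topological disc in 𝕋². -/
def IsTopDisc (D : Set T2) : Prop :=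
  IsOpen D ∧ Nonempty (D ≃ₜ Metric.ball (0 : R2) 1)

/-- `D` is simple with respect to the fundamental domain `F`: some connected component of
π⁻¹(D) is contained in `F`. -/
def IsSimpleDisc (D : Set T2) (F : Set R2) : Prop :=
  ∃ x ∈ pr2 ⁻¹' D, connectedComponentIn (pr2 ⁻¹' D) x ⊆ F

/-- `u` is the rotation vector of `g`, defined as the mean displacement
∫_{𝕋²} (g̃(x̃) − x̃) dλ(x) mod ℤ² of an equivariant lift `G` of `g`. -/
def IsRotOf (g : T2 → T2) (u : T2) : Prop :=
  ∃ (G : R2 → R2) (Φ : T2 → R2), Continuous G ∧ IsLift G g ∧ Equivariant G ∧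
    (∀ z : R2, Φ (pr2 z) = G z - z) ∧ u = pr2 (∫ x : T2, Φ x)

/-- The set Γ = ((ℚ×ℝ)/ℤ²) ∪ ((ℝ×ℚ)/ℤ²) of points of 𝕋² with at least one rational
coordinate. -/
def GammaSet : Set T2 :=
  {x | (∃ q : ℚ, x.1 = ((q : ℝ) : AddCircle (1 : ℝ))) ∨
       (∃ q : ℚ, x.2 = ((q : ℝ) : AddCircle (1 : ℝ)))}

theorem exists_log {A : Type*} [TopologicalSpace A] [SimplyConnectedSpace A]
    [LocallyPathConnectedSpace A]
    (φ : A → ℂ) (hφ : Continuous φ) (h0 : ∀ a, φ a ≠ 0) :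
    ∃ L : A → ℂ, Continuous L ∧ ∀ a, Complex.exp (L a) = φ a := by
  obtain ⟨a₀⟩ : Nonempty A := inferInstance
  obtain ⟨F, ⟨-, hF⟩, -⟩ := Complex.isCoveringMapOn_exp.existsUnique_continuousMap_lifts
    (f := ⟨φ, hφ⟩) (a₀ := a₀) (e₀ := Complex.log (φ a₀)) (by simp [Complex.exp_log (h0 a₀)]) (by
      intro a; simpa using h0 a)
  exact ⟨F, F.continuous, fun a => congrFun hF a⟩

theorem log_diff_const {A : Type*} [TopologicalSpace A] [PreconnectedSpace A]
    (L M : A → ℂ) (hL : Continuous L) (hM : Continuous M)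
    (h : ∀ a b, Complex.exp (L a - M a) = Complex.exp (L b - M b)) (a b : A) :
    L a - M a = L b - M b :=
  Complex.isCoveringMap_exp.const_of_comp (g := fun a => L a - M a) (hL.sub hM)
    (fun a b => Subtype.ext (h a b)) a b

theorem mem_slit_of_near {ρ : ℂ} (h : ‖ρ - 1‖ < 1) : ρ ∈ Complex.slitPlane := by
  left
  have := (Complex.abs_re_le_norm (ρ - 1)).trans_lt h
  simp at this
  linarith [(abs_lt.1 this).1]

/-- A continuous map of the plane at bounded distance from the identity has a zero. -/
theorem exists_zero_of_near_id (Φ : ℂ → ℂ) (hΦ : Continuous Φ) (C : ℝ)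
    (hC : ∀ z, ‖Φ z - z‖ ≤ C) : ∃ z, Φ z = 0 := by
  by_contra hne
  push Not at hne
  obtain ⟨L, hL, hexp⟩ := exists_log Φ hΦ hne
  have hC0 : 0 ≤ C := (norm_nonneg _).trans (hC 0)
  set R : ℝ := C + 1
  have hR : 0 < R := by positivity
  have hRC : (R : ℂ) ≠ 0 := by exact_mod_cast hR.ne'
  let z : ℝ → ℂ := fun t => R * Complex.exp (t * Complex.I)
  have hz : Continuous z := by fun_prop
  have hz0 : ∀ t, z t ≠ 0 := fun t => mul_ne_zero hRC (Complex.exp_ne_zero _)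
  have hzn : ∀ t, ‖z t‖ = R := fun t => by
    simp [z, Complex.norm_exp_ofReal_mul_I, abs_of_pos hR]
  have hρ : ∀ t, Φ (z t) / z t ∈ Complex.slitPlane := fun t => by
    apply mem_slit_of_near
    rw [div_sub_one (hz0 t), norm_div, hzn, div_lt_one hR]
    exact (hC _).trans_lt (by simp [R])
  have key := log_diff_const (A := ℝ) (fun t => L (z t))
    (fun t => Complex.log (Φ (z t) / z t) + Complex.log R + t * Complex.I)
    (hL.comp hz) (by
      have : Continuous fun t => Complex.log (Φ (z t) / z t) :=
        Continuous.clog ((hΦ.comp hz).div hz hz0) hρ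
      fun_prop) (by
      have : ∀ t : ℝ, Complex.exp (L (z t) -
        (Complex.log (Φ (z t) / z t) + Complex.log R + t * Complex.I)) = 1 := fun t => by
        rw [Complex.exp_sub, hexp, Complex.exp_add, Complex.exp_add, Complex.exp_log hRC,
          Complex.exp_log (div_ne_zero (hne _) (hz0 t)), mul_assoc]
        change Φ (z t) / (Φ (z t) / z t * z t) = 1
        rw [div_mul_cancel₀ _ (hz0 t), div_self (hne _)]
      intro a b; rw [this, this]) 0 (2 * Real.pi)
  have h2 : z (2 * Real.pi) = z 0 := by
    simp [z, Complex.exp_two_pi_mul_I]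
  simp only [h2] at key
  have : (2 * Real.pi : ℂ) * Complex.I = 0 := by
    push_cast at key
    linear_combination key
  simp [Real.pi_ne_zero] at this

/-- Lifted angle cocycle of an injective map at bounded distance from the identity. -/
theorem exists_angle_cocycle (Q : ℂ → ℂ) (hQ : Continuous Q) (hinj : Function.Injective Q) (C : ℝ)
    (hC : ∀ z, ‖Q z - z‖ ≤ C) :
    ∃ T : ℂ × ℂ → ℂ, Continuous T ∧
      (∀ z s, Complex.exp (T (z, s)) = (Q (z + Complex.exp s) - Q z) / Complex.exp s) ∧
      (∀ z s, T (z + Complex.exp s, s + Real.pi * Complex.I) = T (z, s)) := by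
  have hne : ∀ z s, Q (z + Complex.exp s) - Q z ≠ 0 := fun z s h => by
    have := hinj (sub_eq_zero.1 h)
    simp [Complex.exp_ne_zero] at this
  obtain ⟨T, hT, hexp⟩ := exists_log
    (fun p : ℂ × ℂ => (Q (p.1 + Complex.exp p.2) - Q p.1) / Complex.exp p.2)
    (Continuous.div (by fun_prop) (by fun_prop) fun p => Complex.exp_ne_zero _)
    (fun p => div_ne_zero (hne _ _) (Complex.exp_ne_zero _))
  have hexp' : ∀ z s, Complex.exp (T (z, s)) = (Q (z + Complex.exp s) - Q z) / Complex.exp s :=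
    fun z s => hexp (z, s)
  have hpi : ∀ s : ℂ, Complex.exp (s + Real.pi * Complex.I) = - Complex.exp s := fun s => by
    rw [Complex.exp_add, Complex.exp_pi_mul_I]; ring
  have hs := log_diff_const (A := ℂ × ℂ)
    (fun p => T (p.1 + Complex.exp p.2, p.2 + Real.pi * Complex.I)) T (by fun_prop) hT (by
      have : ∀ p : ℂ × ℂ, Complex.exp
        (T (p.1 + Complex.exp p.2, p.2 + Real.pi * Complex.I) - T p) = 1 := by
        rintro ⟨z, s⟩
        rw [Complex.exp_sub, hexp', hexp', hpi]
        rw [div_eq_one_iff_eq (div_ne_zero (hne _ _) (Complex.exp_ne_zero _))]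
        simp only [add_neg_cancel_right]
        rw [div_neg, ← neg_div]
        ring
      intro a b; rw [this, this])
  have hC0 : 0 ≤ C := (norm_nonneg _).trans (hC 0)
  set R : ℝ := 2 * C + 1
  have hR : 0 < R := by positivity
  have hRC : (R : ℂ) ≠ 0 := by exact_mod_cast hR.ne'
  let s : ℝ → ℂ := fun t => Complex.log R + t * Complex.I
  have hsc : Continuous s := by fun_prop
  have hsn : ∀ t, ‖Complex.exp (s t)‖ = R := fun t => by
    simp [s, Complex.exp_add, Complex.norm_exp_ofReal_mul_I, Complex.exp_log hRC, abs_of_pos hR]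
  let ρ : ℝ → ℂ := fun t => (Q (0 + Complex.exp (s t)) - Q 0) / Complex.exp (s t)
  have hρ : ∀ t, ρ t ∈ Complex.slitPlane := fun t => by
    apply mem_slit_of_near
    simp only [ρ]
    rw [div_sub_one (Complex.exp_ne_zero _), norm_div, hsn, div_lt_one hR]
    calc ‖Q (0 + Complex.exp (s t)) - Q 0 - Complex.exp (s t)‖
        = ‖(Q (0 + Complex.exp (s t)) - (0 + Complex.exp (s t))) - (Q 0 - 0)‖ := by congr 1; ring
      _ ≤ C + C := (norm_sub_le _ _).trans (add_le_add (hC _) (hC _))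
      _ < R := by simp only [R]; linarith
  have hρc : Continuous ρ := Continuous.div (by fun_prop) (by fun_prop) fun p => Complex.exp_ne_zero _
  have key := log_diff_const (A := ℝ) (fun t => T (0, s t)) (fun t => Complex.log (ρ t))
    (by fun_prop) (Continuous.clog hρc hρ) (by
      have : ∀ t, Complex.exp (T (0, s t) - Complex.log (ρ t)) = 1 := fun t => by
        rw [Complex.exp_sub, hexp', Complex.exp_log (Complex.slitPlane_ne_zero (hρ t))]
        exact div_self (Complex.slitPlane_ne_zero (hρ t))
      intro a b; rw [this, this]) 0 (2 * Real.pi)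
  have hs2 : s (2 * Real.pi) = s 0 + Real.pi * Complex.I + Real.pi * Complex.I := by
    simp [s]; ring
  have hr2 : ρ (2 * Real.pi) = ρ 0 := by
    simp only [ρ, hs2, hpi, neg_neg]
  have h1 := hs (0, s 0) (0 + Complex.exp (s 0), s 0 + Real.pi * Complex.I)
  simp only [hpi, add_neg_cancel_right] at h1
  rw [← hs2] at h1
  simp only [hr2] at key
  have h0 : T (0 + Complex.exp (s 0), s 0 + Real.pi * Complex.I) - T (0, s 0) = 0 := by
    linear_combination (1/2) * h1 - (1/2) * key
  refine ⟨T, hT, hexp', fun z u => ?_⟩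
  have := hs (z, u) (0, s 0)
  simp only at this
  rw [h0] at this
  exact sub_eq_zero.1 this

theorem angle_cocycle_odd {T : ℂ × ℂ → ℂ}
    (h : ∀ z s, T (z + Complex.exp s, s + Real.pi * Complex.I) = T (z, s)) (z s : ℂ) (j : ℤ) :
    T (z + Complex.exp s, s + Real.pi * Complex.I + j * (2 * Real.pi * Complex.I)) = T (z, s) := by
  have h2 : ∀ z s, T (z, s + 2 * Real.pi * Complex.I) = T (z, s) := fun z s => by
    have h1 := h (z + Complex.exp s) (s + Real.pi * Complex.I)
    rw [h z s, Complex.exp_add, Complex.exp_pi_mul_I] at h1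
    rw [← h1]
    congr 2 <;> ring
  have h3 : ∀ (j : ℤ) z s, T (z, s + j * (2 * Real.pi * Complex.I)) = T (z, s) := by
    intro j
    induction j using Int.induction_on with
    | zero => simp
    | succ i ih =>
      intro z s
      rw [← ih z s, ← h2 z (s + (i : ℤ) * (2 * Real.pi * Complex.I))]
      congr 2; push_cast; ring
    | pred i ih =>
      intro z s
      rw [← ih z s, ← h2 z (s + _ )]
      congr 2; push_cast; ring
  rw [h3, h]

/-- Doubling: a path connected set which is free for a fixed point free `Q` is free for `Q²`. -/
theorem doubling (Q : ℂ → ℂ) (hQ : Continuous Q) (hinj : Function.Injective Q) (C : ℝ)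
    (hC : ∀ z, ‖Q z - z‖ ≤ C) (hfix : ∀ z, Q z ≠ z) (E : Set ℂ) (hE : IsPathConnected E)
    (hfree : ∀ z ∈ E, Q z ∉ E) : ∀ z ∈ E, Q (Q z) ∉ E := by
  intro x hx hx2
  obtain ⟨T, hT, hTe, hTs⟩ := exists_angle_cocycle Q hQ hinj C hC
  obtain ⟨c, hc⟩ := hE.joinedIn _ hx2 _ hx
  obtain ⟨L, hL, hLe⟩ := exists_log (fun z => Q z - z) (by fun_prop)
    (fun z => sub_ne_zero.2 (hfix z))
  let y : ℝ → ℂ := c.extend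
  have hy : Continuous y := c.continuous_extend
  have hyE : ∀ u, y u ∈ E := fun u => by
    simp only [y]
    exact hc _
  have hy0 : y 0 = Q (Q x) := c.extend_zero
  have hy1 : y 1 = x := c.extend_one
  have hne : ∀ u v, Q (y u) - y v ≠ 0 := fun u v h =>
    hfree _ (hyE u) (by rw [sub_eq_zero.1 h]; exact hyE v)
  obtain ⟨Θ', hΘ', hΘe'⟩ := exists_log (fun p : ℝ × ℝ => Q (y p.1) - y p.2) (by fun_prop)
    (fun p => hne _ _)
  have hd := log_diff_const (A := ℝ) (fun u => Θ' (u, u)) (fun u => L (y u)) (by fun_prop)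
    (by fun_prop) (by
      have : ∀ u : ℝ, Complex.exp (Θ' (u, u) - L (y u)) = 1 := fun u => by
        rw [Complex.exp_sub, hΘe', hLe, div_self (hne u u)]
      intro a b; rw [this, this])
  have hd0 : Complex.exp (Θ' (0, 0) - L (y 0)) = 1 := by
    rw [Complex.exp_sub, hΘe', hLe, div_self (hne 0 0)]
  let Θ : ℝ × ℝ → ℂ := fun p => Θ' p - (Θ' (0, 0) - L (y 0))
  have hΘ : Continuous Θ := by fun_prop
  have hΘe : ∀ u v, Complex.exp (Θ (u, v)) = Q (y u) - y v := fun u v => by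
    simp only [Θ]
    rw [Complex.exp_sub, hd0, hΘe', div_one]
  have hΘd : ∀ u, Θ (u, u) = L (y u) := fun u => by
    simp only [Θ]; linear_combination hd u 0
  have hk := log_diff_const (A := ℂ) (fun z => T (z, L z)) (fun z => L (Q z) - L z) (by fun_prop)
    (by fun_prop) (by
      have : ∀ z : ℂ, Complex.exp (T (z, L z) - (L (Q z) - L z)) = 1 := fun z => by
        rw [Complex.exp_sub, hTe, Complex.exp_sub, hLe, hLe]
        rw [add_sub_cancel, div_self]
        exact div_ne_zero (sub_ne_zero.2 (hfix _)) (sub_ne_zero.2 (hfix _))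
      intro a b; rw [this, this]) x (Q x)
  have hsl := log_diff_const (A := ℝ) (fun v => Θ (1, v) + T (y v, Θ (1, v))) (fun v => Θ (v, 0))
    (by fun_prop) (by fun_prop) (by
      have : ∀ v : ℝ, Complex.exp (Θ (1, v) + T (y v, Θ (1, v)) - Θ (v, 0)) = -1 := fun v => by
        rw [Complex.exp_sub, Complex.exp_add, hTe, hΘe, hΘe,
          mul_div_cancel₀ _ (hne 1 v), add_sub_cancel, hy1, hy0]
        have := hne v 0
        rw [hy0] at this
        field_simp
        ring
      intro a b; rw [this, this]) 1 0
  set X := Θ (1, 0) with hX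
  have hXe : Complex.exp X = Complex.exp (L (Q x) + Real.pi * Complex.I) := by
    rw [hΘe, Complex.exp_add, Complex.exp_pi_mul_I, hLe, hy1, hy0]; ring
  obtain ⟨j, hj⟩ := Complex.exp_eq_exp_iff_exists_int.1 hXe
  have hT0 : T (Q (Q x), X) = T (Q x, L (Q x)) := by
    rw [hj, ← angle_cocycle_odd hTs (Q x) (L (Q x)) j, hLe]
    congr 2; ring
  simp only [hΘd, hy1, hy0, hT0] at hsl
  have hXL : X = L (Q x) := by linear_combination (-1/2) * hsl + (1/2) * hk
  have : Complex.exp X = Complex.exp (L (Q x)) := by rw [hXL]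
  rw [hXe, Complex.exp_add, Complex.exp_pi_mul_I] at this
  have h3 := Complex.exp_ne_zero (L (Q x))
  apply h3
  linear_combination (-1/2) * this

theorem doubling2 (Q : R2 → R2) (hQ : Continuous Q) (hinj : Function.Injective Q) (C : ℝ)
    (hC : ∀ z, ‖Q z - z‖ ≤ C) (hfix : ∀ z, Q z ≠ z) (E : Set R2) (hE : IsPathConnected E)
    (hfree : ∀ z ∈ E, Q z ∉ E) : ∀ z ∈ E, Q (Q z) ∉ E := by
  let e : ℂ ≃L[ℝ] R2 := Complex.equivRealProdCLM
  have key := doubling (fun z => e.symm (Q (e z))) (by fun_prop)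
    (fun a b h => e.injective (hinj (e.symm.injective h)))
    (‖(e.symm : R2 →L[ℝ] ℂ)‖ * C) (fun z => by
      have : e.symm (Q (e z)) - z = (e.symm : R2 →L[ℝ] ℂ) (Q (e z) - e z) := by simp
      rw [this]
      exact (ContinuousLinearMap.le_opNorm _ _).trans
        (mul_le_mul_of_nonneg_left (hC _) (norm_nonneg _)))
    (fun z h => hfix (e z) (by
      have h2 := congrArg e h
      simpa using h2))
    (e.symm '' E) (hE.image e.symm.continuous)
    (by
      rintro _ ⟨z, hz, rfl⟩ ⟨w, hw, hw2⟩
      have := e.symm.injective hw2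
      simp only [ContinuousLinearEquiv.apply_symm_apply] at this
      exact hfree z hz (this ▸ hw))
  intro z hz hz2
  refine key (e.symm z) ⟨z, hz, rfl⟩ ⟨_, hz2, ?_⟩
  simp

/-- Two curves of transverse asymptotic directions intersect. -/
theorem crossing (α β : ℝ → R2) (hα : Continuous α) (hβ : Continuous β) (v w : R2)
    (hvw : v.1 * w.2 - v.2 * w.1 ≠ 0) (C : ℝ) (hαC : ∀ s, ‖α s - s • v‖ ≤ C)
    (hβC : ∀ t, ‖β t - t • w‖ ≤ C) : ∃ s t, α s = β t := by
  set D := v.1 * w.2 - v.2 * w.1 with hD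
  let φ : R2 → ℂ := fun d => (((d.1 * w.2 - d.2 * w.1) / D : ℝ) : ℂ) +
    (((d.1 * v.2 - d.2 * v.1) / D : ℝ) : ℂ) * Complex.I
  have hφ : Continuous φ := by fun_prop
  have hφb : ∀ d : R2, ‖d‖ ≤ 2 * C → ‖φ d‖ ≤ (2 * C) * ((‖w‖ + ‖w‖) / |D|) +
      (2 * C) * ((‖v‖ + ‖v‖) / |D|) := by
    have aux : ∀ d w : R2, ‖d‖ ≤ 2 * C →
      ‖(((d.1 * w.2 - d.2 * w.1) / D : ℝ) : ℂ)‖ ≤ (2 * C) * ((‖w‖ + ‖w‖) / |D|) := by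
      intro d w hd
      rw [Complex.norm_real, norm_div, Real.norm_eq_abs D, ← mul_div_assoc]
      gcongr
      refine (norm_sub_le _ _).trans ?_
      rw [norm_mul, norm_mul, mul_add]
      have h1 := (norm_fst_le d).trans hd
      have h2 := (norm_snd_le d).trans hd
      have h3 := norm_fst_le w
      have h4 := norm_snd_le w
      have := norm_nonneg d.1
      gcongr <;> linarith
    intro d hd
    refine (norm_add_le _ _).trans (add_le_add (aux d w hd) ?_)
    rw [norm_mul, Complex.norm_I, mul_one]
    exact aux d v hd
  obtain ⟨z, hz⟩ := exists_zero_of_near_id (fun z => φ (α z.re - β z.im))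
    (by fun_prop) _ (fun z => by
      have : φ (α z.re - β z.im) - z =
          φ ((α z.re - z.re • v) - (β z.im - z.im • w)) := by
        conv_lhs => rw [← Complex.re_add_im z]
        simp only [φ, Complex.add_re, Complex.ofReal_re, Complex.mul_re, Complex.I_re, mul_zero,
          Complex.ofReal_im, Complex.I_im, mul_one, sub_self, add_zero, Complex.add_im,
          Complex.mul_im, zero_add, Prod.fst_sub, Prod.snd_sub, Prod.smul_fst, Prod.smul_snd,
          smul_eq_mul]
        have hD' : (D : ℂ) ≠ 0 := by exact_mod_cast hvw
        have hD2 : (D : ℂ) = v.1 * w.2 - v.2 * w.1 := by rw [hD]; push_cast; ring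
        push_cast
        field_simp
        rw [hD2]
        ring
      rw [this]
      apply hφb
      refine (norm_sub_le _ _).trans ?_
      linarith [hαC z.re, hβC z.im])
  refine ⟨z.re, z.im, ?_⟩
  have h1 := congrArg Complex.re hz
  have h2 := congrArg Complex.im hz
  set d := α z.re - β z.im
  simp only [φ, Complex.add_re, Complex.ofReal_re, Complex.mul_re, Complex.I_re, mul_zero,
          Complex.ofReal_im, Complex.I_im, mul_one, sub_self, add_zero, Complex.add_im,
          Complex.mul_im, zero_add, Complex.zero_re, Complex.zero_im, div_eq_zero_iff, hvw,
          or_false] at h1 h2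
  have hd1 : d.1 = 0 := by
    have : d.1 * D = 0 := by rw [hD]; linear_combination v.1 * h1 - w.1 * h2
    simpa [hvw] using this
  have hd2 : d.2 = 0 := by
    have : d.2 * D = 0 := by rw [hD]; linear_combination v.2 * h1 - w.2 * h2
    simpa [hvw] using this
  exact sub_eq_zero.1 (Prod.ext hd1 hd2)

theorem closure_component {X : Type*} [TopologicalSpace X] [LocallyConnectedSpace X] {U : Set X}
    (hU : IsOpen U) {a y : X} (hy : y ∈ closure (connectedComponentIn U a)) (hyU : y ∈ U) :
    y ∈ connectedComponentIn U a := by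
  obtain ⟨z, hz1, hz2⟩ := mem_closure_iff.1 hy _ (hU.connectedComponentIn (x := y))
    (mem_connectedComponentIn hyU)
  rw [connectedComponentIn_eq hz2, ← connectedComponentIn_eq hz1]
  exact mem_connectedComponentIn hyU

theorem one_side (Q : R2 ≃ₜ R2) (X : Set R2) (hXc : IsClosed X) (hXp : IsPreconnected X)
    (hXn : X.Nonempty) (hdisj : Disjoint (Q '' X) X) (s : ℕ) (hs : 0 < s)
    (hsX : (Q ^ s : R2 ≃ₜ R2) '' X = X) (a : R2) (ha : a ∉ X)
    (ha1 : Q a ∈ connectedComponentIn (Q '' X)ᶜ a)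
    (has : (Q ^ s : R2 ≃ₜ R2) a ∈ connectedComponentIn Xᶜ a) :
    X ⊆ Q '' connectedComponentIn Xᶜ a := by
  set L := connectedComponentIn Xᶜ a with hL
  have hQL : Q '' L = connectedComponentIn (Q '' X)ᶜ a := by
    rw [hL, Q.image_connectedComponentIn (by exact ha), Q.image_compl, connectedComponentIn_eq ha1]
  have hsL : (Q ^ s : R2 ≃ₜ R2) '' L = L := by
    rw [hL, (Q ^ s).image_connectedComponentIn (by exact ha), (Q ^ s).image_compl, hsX,
      ← connectedComponentIn_eq has]
  have hQXc : IsClosed (Q '' X) := Q.isClosed_image.2 hXc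
  have haL : a ∈ L := mem_connectedComponentIn ha
  by_cases h : (X ∩ Q '' L).Nonempty
  · obtain ⟨y, hyX, hyL⟩ := h
    have hsub : X ⊆ (Q '' X)ᶜ := fun x hx hx2 => Set.disjoint_left.1 hdisj hx2 hx
    have := hXp.subset_connectedComponentIn hyX hsub
    rw [hQL] at hyL ⊢
    rwa [← connectedComponentIn_eq hyL] at this
  · exfalso
    have haQ : a ∈ Q '' L := by
      rw [hQL]
      refine mem_connectedComponentIn ?_
      by_contra hn
      rw [connectedComponentIn_eq_empty hn] at ha1
      exact ha1
    have h1 : Q '' L ⊆ L := by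
      have hp : IsPreconnected (Q '' L) := by rw [hQL]; exact isPreconnected_connectedComponentIn
      refine hp.subset_connectedComponentIn haQ ?_
      intro x hx hxX
      exact h ⟨x, hxX, hx⟩
    have h2 : ∀ k : ℕ, (Q ^ k : R2 ≃ₜ R2) '' L ⊆ L := by
      intro k
      induction k with
      | zero =>
        rintro _ ⟨x, hx, rfl⟩
        exact hx
      | succ k ih =>
        rintro _ ⟨x, hx, rfl⟩
        rw [pow_succ']
        exact h1 ⟨(Q ^ k : R2 ≃ₜ R2) x, ih ⟨x, hx, rfl⟩, rfl⟩
    have h3 : L ⊆ Q '' L := by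
      obtain ⟨k, rfl⟩ : ∃ k, s = k + 1 := ⟨s - 1, by omega⟩
      intro x hx
      rw [← hsL] at hx
      obtain ⟨y, hy, rfl⟩ := hx
      rw [pow_succ']
      exact ⟨(Q ^ k : R2 ≃ₜ R2) y, h2 k ⟨y, hy, rfl⟩, rfl⟩
    have h4 : Q '' L = L := h1.antisymm h3
    have hLo : IsOpen L := hXc.isOpen_compl.connectedComponentIn
    have hLne : L ≠ Set.univ := by
      obtain ⟨x, hx⟩ := hXn
      intro hu
      have : x ∈ L := hu ▸ Set.mem_univ x
      exact connectedComponentIn_subset _ _ this hx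
    have hncl : ¬ IsClosed L := by
      intro hc
      rcases isClopen_iff.1 ⟨hc, hLo⟩ with h | h
      · rw [h] at haL; exact haL
      · exact hLne h
    obtain ⟨y, hy1, hy2⟩ : ∃ y, y ∈ closure L ∧ y ∉ L := by
      by_contra hcon
      push Not at hcon
      exact hncl (closure_subset_iff_isClosed.1 hcon)
    have hyX : y ∈ X := by
      by_contra hyX
      exact hy2 (closure_component hXc.isOpen_compl hy1 hyX)
    have hyQ : y ∈ Q '' X := by
      by_contra hyX
      rw [← h4, hQL] at hy1 hy2
      exact hy2 (closure_component hQXc.isOpen_compl hy1 hyX)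
    exact Set.disjoint_left.1 hdisj hyQ hyX

theorem order_lemma (Q : R2 ≃ₜ R2) (X : Set R2) (hXc : IsClosed X) (hXp : IsPreconnected X)
    (hXn : X.Nonempty) (hdisj : Disjoint (Q '' X) X) (s : ℕ) (hs : 0 < s)
    (hsX : (Q ^ s : R2 ≃ₜ R2) '' X = X) (a b : R2) (ha : a ∉ X) (hb : b ∉ X)
    (ha1 : Q a ∈ connectedComponentIn (Q '' X)ᶜ a)
    (has : (Q ^ s : R2 ≃ₜ R2) a ∈ connectedComponentIn Xᶜ a)
    (hb1 : Q b ∈ connectedComponentIn (Q '' X)ᶜ b)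
    (hbs : (Q ^ s : R2 ≃ₜ R2) b ∈ connectedComponentIn Xᶜ b) :
    b ∈ connectedComponentIn Xᶜ a := by
  obtain ⟨x, hx⟩ := hXn
  obtain ⟨y, hy, hyx⟩ := one_side Q X hXc hXp ⟨x, hx⟩ hdisj s hs hsX a ha ha1 has hx
  obtain ⟨y', hy', hyx'⟩ := one_side Q X hXc hXp ⟨x, hx⟩ hdisj s hs hsX b hb hb1 hbs hx
  obtain rfl : y = y' := Q.injective (hyx.trans hyx'.symm)
  rw [connectedComponentIn_eq hy, ← connectedComponentIn_eq hy']
  exact mem_connectedComponentIn hb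

/-- The bi-infinite curve obtained by iterating an arc joining `x` to `T x`. -/
def orbitLine (T : R2 ≃ₜ R2) {x y : R2} (γ : Path x y) (t : ℝ) : R2 :=
  (T ^ ⌊t⌋ : R2 ≃ₜ R2) (γ.extend (Int.fract t))

theorem orbitLine_eq (T : R2 ≃ₜ R2) {x y : R2} (γ : Path x y) (hy : y = T x) (k : ℤ) {t : ℝ}
    (ht : t ∈ Set.Icc (k : ℝ) (k + 1)) :
    orbitLine T γ t = (T ^ k : R2 ≃ₜ R2) (γ.extend (t - k)) := by
  rcases lt_or_eq_of_le ht.2 with h | h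
  · have hf : ⌊t⌋ = k := Int.floor_eq_iff.2 ⟨ht.1, h⟩
    rw [orbitLine, Int.fract, hf]
  · subst h
    have hf : ⌊(k : ℝ) + 1⌋ = k + 1 := by
      have : ((k : ℝ) + 1) = ((k + 1 : ℤ) : ℝ) := by push_cast; ring
      rw [this, Int.floor_intCast]
    rw [orbitLine, Int.fract, hf]
    have h0 : (k : ℝ) + 1 - ((k + 1 : ℤ) : ℝ) = 0 := by push_cast; ring
    have h1 : (k : ℝ) + 1 - k = 1 := by ring
    rw [h0, h1, γ.extend_zero, γ.extend_one, hy, zpow_add_one]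
    rfl

theorem orbitLine_continuous (T : R2 ≃ₜ R2) {x y : R2} (γ : Path x y) (hy : y = T x) :
    Continuous (orbitLine T γ) := by
  have hlf : LocallyFinite fun k : ℤ => Set.Icc (k : ℝ) (k + 1) := by
    intro x
    refine ⟨Metric.ball x 1, Metric.ball_mem_nhds x one_pos, ?_⟩
    refine (Set.finite_Icc (⌊x⌋ - 3) (⌊x⌋ + 3)).subset ?_
    rintro k ⟨y, hy1, hy2⟩
    rw [Metric.mem_ball, Real.dist_eq, abs_lt] at hy2
    have h1 := Int.floor_le x
    have h2 := Int.lt_floor_add_one x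
    obtain ⟨h3, h4⟩ := hy1
    constructor
    · have : ((⌊x⌋ - 3 : ℤ) : ℝ) ≤ k := by push_cast; linarith [hy2.1, hy2.2]
      exact_mod_cast this
    · have : (k : ℝ) ≤ ((⌊x⌋ + 3 : ℤ) : ℝ) := by push_cast; linarith [hy2.1, hy2.2]
      exact_mod_cast this
  refine hlf.continuous ?_ (fun k => isClosed_Icc) fun k => ?_
  · refine Set.eq_univ_of_forall fun t => Set.mem_iUnion.2 ⟨⌊t⌋, Int.floor_le t, ?_⟩
    exact (Int.lt_floor_add_one t).le
  · refine ContinuousOn.congr (f := fun t => (T ^ k : R2 ≃ₜ R2) (γ.extend (t - k))) ?_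
      fun t ht => orbitLine_eq T γ hy k ht
    exact ((T ^ k).continuous.comp (γ.continuous_extend.comp (by fun_prop))).continuousOn

theorem orbitLine_add_one (T : R2 ≃ₜ R2) {x y : R2} (γ : Path x y) (t : ℝ) :
    orbitLine T γ (t + 1) = T (orbitLine T γ t) := by
  rw [orbitLine, orbitLine, Int.fract_add_one, Int.floor_add_one, add_comm, zpow_one_add]
  rfl

section drift
variable {H : R2 → R2} {C : ℝ} {Q : R2 ≃ₜ R2} {δ : R2}

theorem drift_zpow (hQ : ∀ z, H (Q z) = H z + δ) (n : ℤ) (z : R2) :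
    H ((Q ^ n : R2 ≃ₜ R2) z) = H z + (n : ℝ) • δ := by
  have hinv : ∀ z, H (Q⁻¹ z) = H z - δ := fun z => by
    have := hQ (Q⁻¹ z)
    have h2 : Q (Q⁻¹ z) = z := Q.apply_symm_apply z
    rw [h2] at this
    rw [this]; simp
  induction n using Int.induction_on generalizing z with
  | zero => simp
  | succ i ih =>
    rw [zpow_add_one]
    change H ((Q ^ (i : ℤ) : R2 ≃ₜ R2) (Q z)) = _
    rw [ih, hQ]; push_cast; module
  | pred i ih =>
    rw [zpow_sub_one]
    change H ((Q ^ (-(i : ℤ)) : R2 ≃ₜ R2) (Q⁻¹ z)) = _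
    rw [ih, hinv]; push_cast; module

theorem drift_bound (hH : ∀ z, ‖H z - z‖ ≤ C) (hQ : ∀ z, H (Q z) = H z + δ) (n : ℤ) (z : R2) :
    ‖(Q ^ n : R2 ≃ₜ R2) z - z - (n : ℝ) • δ‖ ≤ 2 * C := by
  have h := drift_zpow hQ n z
  have : (Q ^ n : R2 ≃ₜ R2) z - z - (n : ℝ) • δ =
    (H z - z) - (H ((Q ^ n : R2 ≃ₜ R2) z) - (Q ^ n : R2 ≃ₜ R2) z) := by rw [h]; module
  rw [this]
  refine (norm_sub_le _ _).trans ?_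
  linarith [hH z, hH ((Q ^ n : R2 ≃ₜ R2) z)]

theorem drift_ne (hδ : δ ≠ 0) (hQ : ∀ z, H (Q z) = H z + δ) (n : ℤ) (hn : n ≠ 0) (z : R2) :
    (Q ^ n : R2 ≃ₜ R2) z ≠ z := by
  intro h
  have := drift_zpow hQ n z
  rw [h] at this
  have h2 : (n : ℝ) • δ = 0 := by simpa using this
  rcases smul_eq_zero.1 h2 with h3 | h3
  · exact hn (by exact_mod_cast h3)
  · exact hδ h3

theorem orbitLine_bound (hH : ∀ z, ‖H z - z‖ ≤ C) (hQ : ∀ z, H (Q z) = H z + δ)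
    {x y : R2} (γ : Path x y) :
    ∃ K, ∀ t, ‖orbitLine Q γ t - t • δ‖ ≤ K := by
  obtain ⟨M, hM⟩ := (isCompact_range γ.continuous).isBounded.exists_norm_le
  refine ⟨2 * C + M + ‖δ‖, fun t => ?_⟩
  have h1 := drift_bound hH hQ ⌊t⌋ (γ.extend (Int.fract t))
  have h2 : ‖γ.extend (Int.fract t)‖ ≤ M := hM _ ⟨_, rfl⟩
  have : orbitLine Q γ t - t • δ = ((Q ^ ⌊t⌋ : R2 ≃ₜ R2) (γ.extend (Int.fract t)) -
    γ.extend (Int.fract t) - (⌊t⌋ : ℝ) • δ) + γ.extend (Int.fract t) - (Int.fract t) • δ := by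
    have ht : t = ⌊t⌋ + Int.fract t := (Int.floor_add_fract t).symm
    have ht2 : t • δ = (⌊t⌋ : ℝ) • δ + (Int.fract t) • δ := by rw [← add_smul, ← ht]
    rw [orbitLine, ht2]
    abel
  rw [this]
  refine (norm_sub_le _ _).trans (add_le_add ((norm_add_le _ _).trans (add_le_add h1 h2)) ?_)
  rw [norm_smul, Real.norm_eq_abs, abs_of_nonneg (Int.fract_nonneg t)]
  exact mul_le_of_le_one_left (norm_nonneg _) (Int.fract_lt_one t).le

end drift

theorem zpow_comp (Q : R2 ≃ₜ R2) (a b : ℤ) (z : R2) :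
    (Q ^ a : R2 ≃ₜ R2) ((Q ^ b : R2 ≃ₜ R2) z) = (Q ^ (a + b) : R2 ≃ₜ R2) z := by
  rw [zpow_add]; rfl

section drift2
variable {H : R2 → R2} {C : ℝ} {Q : R2 ≃ₜ R2} {δ : R2}

theorem hit_double (hH : ∀ z, ‖H z - z‖ ≤ C) (hQ : ∀ z, H (Q z) = H z + δ) (hδ : δ ≠ 0)
    (E : Set R2) (hE : IsPathConnected E) (b : ℤ) (hb : b ≠ 0)
    (h : ∃ z ∈ E, (Q ^ (2 * b) : R2 ≃ₜ R2) z ∈ E) : ∃ z ∈ E, (Q ^ b : R2 ≃ₜ R2) z ∈ E := by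
  by_contra hcon
  push Not at hcon
  obtain ⟨z, hz, hz2⟩ := h
  refine doubling2 (Q ^ b : R2 ≃ₜ R2) (Q ^ b).continuous (Q ^ b).injective
    (2 * C + ‖(b : ℝ) • δ‖) (fun z => ?_) (drift_ne hδ hQ b hb) E hE hcon z hz ?_
  · have := drift_bound hH hQ b z
    have h2 := norm_add_le ((Q ^ b : R2 ≃ₜ R2) z - z - (b : ℝ) • δ) ((b : ℝ) • δ)
    rw [sub_add_cancel] at h2
    linarith
  · rw [zpow_comp, ← two_mul]; exact hz2

theorem hit_dvd (hH : ∀ z, ‖H z - z‖ ≤ C) (hQ : ∀ z, H (Q z) = H z + δ) (hδ : δ ≠ 0)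
    (D : Set R2) (hD : IsPathConnected D) (s : ℕ) (hs : 0 < s)
    (hSs : ∃ z ∈ D, (Q ^ (s : ℤ) : R2 ≃ₜ R2) z ∈ D)
    (hmin : ∀ m : ℕ, 0 < m → m < s → ¬ ∃ z ∈ D, (Q ^ (m : ℤ) : R2 ≃ₜ R2) z ∈ D) (n : ℤ)
    (hn : ∃ z ∈ D, (Q ^ n : R2 ≃ₜ R2) z ∈ D) : (s : ℤ) ∣ n := by
  let S : ℤ → Prop := fun n => ∃ z ∈ D, (Q ^ n : R2 ≃ₜ R2) z ∈ D
  have hsymm : ∀ n, S n → S (-n) := by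
    rintro n ⟨z, hz, hz2⟩
    refine ⟨_, hz2, ?_⟩
    rw [zpow_comp]; simpa using hz
  have hsymm2 : ∀ n, S n → S (n.natAbs) := by
    intro n hn
    rcases Int.natAbs_eq n with h | h
    · rwa [← h]
    · have := hsymm n hn
      rwa [h, neg_neg] at this
  have hdouble : ∀ b : ℤ, b ≠ 0 → S (2 * b) → S b := fun b hb h =>
    hit_double hH hQ hδ D hD b hb h
  have key : ∀ n : ℕ, S n → s ∣ n := by
    intro n
    induction n using Nat.strong_induction_on with
    | _ n ih =>
      intro hSn
      by_contra hnd
      have hn0 : n ≠ 0 := by rintro rfl; exact hnd (dvd_zero _)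
      have hns : s < n := by
        by_contra hle
        rcases lt_or_eq_of_le (not_lt.1 hle) with h | h
        · exact hmin n (by omega) h hSn
        · exact hnd (h ▸ dvd_rfl)
      have hnodd : n % 2 = 1 := by
        by_contra he
        obtain ⟨m, rfl⟩ : ∃ m, n = 2 * m := ⟨n / 2, by omega⟩
        have : S m := hdouble m (by omega) (by simpa using hSn)
        exact hnd ((ih m (by omega) this).mul_left 2)
      have hsodd : s % 2 = 1 := by
        by_contra he
        obtain ⟨m, rfl⟩ : ∃ m, s = 2 * m := ⟨s / 2, by omega⟩
        have : S m := hdouble m (by omega) (by push_cast at hSs; exact hSs)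
        exact hmin m (by omega) (by omega) this
      obtain ⟨b, hb⟩ : ∃ b, n = 2 * b + s := ⟨(n - s) / 2, by omega⟩
      have hnb : ¬ (s : ℤ) ∣ b := by
        intro h
        apply hnd
        rw [hb]
        exact ((Int.natCast_dvd_natCast.1 h).mul_left 2).add dvd_rfl
      have hno : ∀ m : ℤ, m.natAbs < n → S m → (s : ℤ) ∣ m := by
        intro m hm hSm
        have := ih _ hm (hsymm2 m hSm)
        exact Int.natCast_dvd.2 this
      have h1 : ¬ S b := fun h => hnb (hno b (by omega) h)
      have h2 : ¬ S (b + s) := fun h => hnb (by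
        have := hno _ (by omega) h
        simpa using this)
      have h3 : ¬ S (b - s) := fun h => hnb (by
        have := hno _ (by omega) h
        simpa using this)
      have hE : IsPathConnected (D ∪ (Q ^ (s : ℤ) : R2 ≃ₜ R2) '' D) := by
        refine hD.union (hD.image (Q ^ (s : ℤ)).continuous) ?_
        obtain ⟨z, hz, hz2⟩ := hSs
        exact ⟨_, hz2, z, hz, rfl⟩
      obtain ⟨d, hd, hd2⟩ := hSn
      obtain ⟨z, hz, hz2⟩ := hit_double hH hQ hδ _ hE (b : ℤ) (by omega)
        ⟨(Q ^ (s : ℤ) : R2 ≃ₜ R2) d, Or.inr ⟨d, hd, rfl⟩, Or.inl (by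
          rw [zpow_comp]
          have : (2 * (b : ℤ) + s) = n := by omega
          rw [this]; exact hd2)⟩
      rcases hz with hz | ⟨z', hz, rfl⟩ <;> rcases hz2 with hz2 | ⟨y, hy, hz2⟩
      · exact h1 ⟨z, hz, hz2⟩
      · refine h3 ⟨z, hz, ?_⟩
        have : (Q ^ ((b : ℤ) - s) : R2 ≃ₜ R2) z = y := by
          have h := congrArg (Q ^ (-(s : ℤ)) : R2 ≃ₜ R2) hz2
          rw [zpow_comp, zpow_comp] at h
          have e : -(s : ℤ) + b = b - s := by ring
          rw [e] at h
          rw [← h]; simp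
        rwa [this]
      · refine h2 ⟨z', hz, ?_⟩
        rwa [zpow_comp] at hz2
      · refine h1 ⟨z', hz, ?_⟩
        have : (Q ^ (b : ℤ) : R2 ≃ₜ R2) z' = y := by
          apply (Q ^ (s : ℤ) : R2 ≃ₜ R2).injective
          rw [hz2, zpow_comp, zpow_comp, add_comm]
        rwa [this]
  have := key _ (hsymm2 n hn)
  exact Int.natCast_dvd.2 this

end drift2

theorem closed_range_of_line (l : ℝ → R2) (hl : Continuous l) (v : R2) (hv : v ≠ 0) (K : ℝ)
    (hK : ∀ t, ‖l t - t • v‖ ≤ K) : IsClosed (Set.range l) := by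
  have : IsProperMap l := by
    rw [isProperMap_iff_tendsto_cocompact]
    refine ⟨hl, ?_⟩
    rw [← Metric.cobounded_eq_cocompact, ← Metric.cobounded_eq_cocompact,
      ← tendsto_norm_atTop_iff_cobounded]
    have h1 : Tendsto (fun t : ℝ => ‖t‖ * ‖v‖ - K) (Bornology.cobounded ℝ) atTop := by
      refine tendsto_atTop_add_const_right _ (-K) ?_
      exact tendsto_norm_cobounded_atTop.atTop_mul_const (norm_pos_iff.2 hv)
    refine tendsto_atTop_mono (fun t => ?_) h1
    have h2 := hK t
    have h3 := norm_sub_norm_le (t • v) (l t)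
    rw [norm_smul, norm_sub_rev] at h3
    linarith
  exact this.isClosedMap.isClosed_range

section drift3
variable {H : R2 → R2} {C : ℝ} {Q : R2 ≃ₜ R2} {δ : R2}

theorem no_line (hH : ∀ z, ‖H z - z‖ ≤ C) (hQ : ∀ z, H (Q z) = H z + δ) (hδ : δ ≠ 0)
    (s : ℕ) (hs : 0 < s) {x y : R2} (γ : Path x y) (hy : y = (Q ^ s : R2 ≃ₜ R2) x)
    (hdisj : Disjoint (Q '' Set.range (orbitLine (Q ^ s) γ)) (Set.range (orbitLine (Q ^ s) γ))) :
    False := by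
  have hT : ∀ z, H ((Q ^ s : R2 ≃ₜ R2) z) = H z + (s : ℝ) • δ := fun z => by
    have := drift_zpow hQ s z
    simpa using this
  have hδ' : (s : ℝ) • δ ≠ 0 := smul_ne_zero (by positivity) hδ
  have hdisp : ∀ (P : R2 ≃ₜ R2) (ε : R2), (∀ z, H (P z) = H z + ε) →
      ∀ z, ‖P z - z‖ ≤ 2 * C + ‖ε‖ := by
    intro P ε hP z
    have h1 := drift_bound hH hP 1 z
    simp only [zpow_one, Int.cast_one, one_smul] at h1
    have h2 := norm_add_le (P z - z - ε) ε
    rw [sub_add_cancel] at h2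
    linarith
  have hC0 : 0 ≤ C := (norm_nonneg _).trans (hH 0)
  set l := orbitLine (Q ^ s) γ with hl
  obtain ⟨K, hK⟩ := orbitLine_bound hH hT γ
  have hlc : Continuous l := orbitLine_continuous _ γ hy
  have hK0 : 0 ≤ K := (norm_nonneg _).trans (hK 0)
  set X := Set.range l with hX
  have hXc : IsClosed X := closed_range_of_line l hlc _ hδ' K hK
  have hXp : IsPreconnected X := isPreconnected_range hlc
  have hXn : X.Nonempty := ⟨l 0, 0, rfl⟩
  have hsX : (Q ^ s : R2 ≃ₜ R2) '' X = X := by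
    apply Set.Subset.antisymm
    · rintro _ ⟨_, ⟨t, rfl⟩, rfl⟩
      exact ⟨t + 1, orbitLine_add_one _ γ t⟩
    · rintro _ ⟨t, rfl⟩
      refine ⟨l (t - 1), ⟨_, rfl⟩, ?_⟩
      rw [hl, ← orbitLine_add_one, sub_add_cancel]
  let u : R2 → ℝ := fun z => δ.1 * z.2 - δ.2 * z.1
  have hub : ∀ z : R2, |u z| ≤ 2 * ‖δ‖ * ‖z‖ := by
    intro z
    have h1 := norm_fst_le δ
    have h2 := norm_snd_le δ
    have h3 := norm_fst_le z
    have h4 := norm_snd_le z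
    have h5 : |u z| ≤ |δ.1 * z.2| + |δ.2 * z.1| := abs_sub _ _
    rw [abs_mul, abs_mul] at h5
    have h6 : |δ.1| * |z.2| ≤ ‖δ‖ * ‖z‖ := mul_le_mul h1 h4 (abs_nonneg _) (norm_nonneg _)
    have h7 : |δ.2| * |z.1| ≤ ‖δ‖ * ‖z‖ := mul_le_mul h2 h3 (abs_nonneg _) (norm_nonneg _)
    linarith
  have husub : ∀ z z' : R2, u (z - z') = u z - u z' := fun z z' => by
    simp only [u, Prod.fst_sub, Prod.snd_sub]; ring
  have hd0 : 0 ≤ ‖δ‖ := norm_nonneg _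
  set B1 := 2 * C + ‖δ‖ with hB1
  set B2 := 2 * C + ‖(s : ℝ) • δ‖ with hB2
  have hB10 : 0 ≤ B1 := by positivity
  have hB20 : 0 ≤ B2 := by positivity
  set c := 2 * ‖δ‖ * (K + B1 + B2) with hc
  have hc0 : 0 ≤ c := by positivity
  have hcK : 2 * ‖δ‖ * K ≤ c := by rw [hc]; gcongr; linarith
  have hcB1 : 2 * ‖δ‖ * B1 ≤ c := by rw [hc]; gcongr; linarith
  have hcB2 : 2 * ‖δ‖ * B2 ≤ c := by rw [hc]; gcongr; linarith
  have hcKB : 2 * ‖δ‖ * K + 2 * ‖δ‖ * B1 ≤ c := by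
    have := mul_nonneg (mul_nonneg zero_le_two hd0) hB20
    rw [hc]; linarith
  have hXu' : ∀ z ∈ X, |u z| ≤ 2 * ‖δ‖ * K := by
    rintro _ ⟨t, rfl⟩
    have h1 : u (l t) = u (l t - t • (s : ℝ) • δ) := by
      simp only [u, Prod.fst_sub, Prod.snd_sub, Prod.smul_fst, Prod.smul_snd, smul_eq_mul]; ring
    rw [h1]
    exact (hub _).trans (mul_le_mul_of_nonneg_left (hK t) (by positivity))
  have hmove : ∀ (P : R2 ≃ₜ R2) (ε : R2), (∀ z, H (P z) = H z + ε) → ∀ z,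
      |u (P z) - u z| ≤ 2 * ‖δ‖ * (2 * C + ‖ε‖) := by
    intro P ε hP z
    rw [← husub]
    exact (hub _).trans (mul_le_mul_of_nonneg_left (hdisp P ε hP z) (by positivity))
  have hXu : ∀ z ∈ X, |u z| ≤ c := fun z hz => (hXu' z hz).trans hcK
  have hQXu : ∀ z ∈ Q '' X, |u z| ≤ c := by
    rintro _ ⟨z, hz, rfl⟩
    have h1 := hXu' z hz
    have h2 := hmove Q δ hQ z
    have h3 := abs_add_le (u z) (u (Q z) - u z)
    rw [add_sub_cancel] at h3
    linarith
  let w : R2 := (-δ.2, δ.1)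
  set e := δ.1 ^ 2 + δ.2 ^ 2 with he
  have he0 : 0 < e := by
    by_contra hne
    have h1 : δ.1 = 0 := by nlinarith [sq_nonneg δ.1, sq_nonneg δ.2]
    have h2 : δ.2 = 0 := by nlinarith [sq_nonneg δ.1, sq_nonneg δ.2]
    exact hδ (Prod.ext h1 h2)
  have huw : ∀ t : ℝ, u (t • w) = t * e := fun t => by
    simp only [u, w, Prod.smul_fst, Prod.smul_snd, smul_eq_mul, he]; ring
  set N := (2 * c + 1) / e with hN
  have hN0 : 0 < N := by positivity
  have hNe : N * e = 2 * c + 1 := by rw [hN]; field_simp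
  have hhalf : ∀ σ : ℝ, (σ = 1 ∨ σ = -1) → ∀ Y : Set R2, (∀ z ∈ Y, |u z| ≤ c) → ∀ z z' : R2,
      c < σ * u z → c < σ * u z' → z' ∈ connectedComponentIn Yᶜ z := by
    intro σ hσ Y hY z z' hz hz'
    have hconv : Convex ℝ {z : R2 | c < σ * u z} := by
      refine convex_halfSpace_gt (f := fun z : R2 => σ * u z) ⟨fun a b => ?_, fun r a => ?_⟩ c
      · simp only [u, Prod.fst_add, Prod.snd_add]; ring
      · simp only [u, Prod.smul_fst, Prod.smul_snd, smul_eq_mul]; ring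
    refine hconv.isPreconnected.subset_connectedComponentIn (F := Yᶜ) hz ?_ hz'
    intro y hy hyY
    have h1 := hY y hyY
    have h2 := abs_le.1 h1
    have hy' : c < σ * u y := hy
    rcases hσ with rfl | rfl <;> linarith
  have hside : ∀ σ : ℝ, (σ = 1 ∨ σ = -1) → (σ * N) • w ∉ X ∧
      Q ((σ * N) • w) ∈ connectedComponentIn (Q '' X)ᶜ ((σ * N) • w) ∧
      (Q ^ s : R2 ≃ₜ R2) ((σ * N) • w) ∈ connectedComponentIn Xᶜ ((σ * N) • w) := by
    intro σ hσ
    have hval : σ * u ((σ * N) • w) = 2 * c + 1 := by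
      rw [huw, ← hNe]; rcases hσ with rfl | rfl <;> ring
    have h1 := abs_le.1 (hmove Q δ hQ ((σ * N) • w))
    have h2 := abs_le.1 (hmove (Q ^ s) _ hT ((σ * N) • w))
    refine ⟨fun h => ?_, hhalf σ hσ _ hQXu _ _ (by linarith) ?_, hhalf σ hσ _ hXu _ _ (by linarith) ?_⟩
    · have := abs_le.1 (hXu _ h)
      rcases hσ with rfl | rfl <;> linarith
    · rcases hσ with rfl | rfl <;> linarith
    · rcases hσ with rfl | rfl <;> linarith
  obtain ⟨ha, ha1, has⟩ := hside 1 (Or.inl rfl)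
  obtain ⟨hb, hb1, hbs⟩ := hside (-1) (Or.inr rfl)
  have hab := order_lemma Q X hXc hXp hXn hdisj s hs hsX _ _ ha hb ha1 has hb1 hbs
  have hpc : IsPathConnected (connectedComponentIn Xᶜ ((1 * N) • w)) := by
    refine (IsOpen.isConnected_iff_isPathConnected hXc.isOpen_compl.connectedComponentIn).1 ?_
    exact isConnected_connectedComponentIn_iff.2 ha
  obtain ⟨p, hp⟩ := hpc.joinedIn _ hab _ (mem_connectedComponentIn ha)
  obtain ⟨M, hM⟩ := (isCompact_range p.continuous).isBounded.exists_norm_le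
  let β : ℝ → R2 := fun t => p.extend ((t + N) / (2 * N)) + (t - max (-N) (min N t)) • w
  have hβc : Continuous β := by
    have := p.continuous_extend
    fun_prop
  have hβb : ∀ t, ‖β t - t • w‖ ≤ M + N * ‖w‖ := by
    intro t
    have h1 : β t - t • w = p.extend ((t + N) / (2 * N)) - (max (-N) (min N t)) • w := by
      simp only [β]; module
    rw [h1]
    refine (norm_sub_le _ _).trans (add_le_add (hM _ ⟨_, rfl⟩) ?_)
    rw [norm_smul]
    gcongr
    rw [Real.norm_eq_abs, abs_le]
    exact ⟨le_max_left _ _, max_le (by linarith) (min_le_left _ _)⟩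
  have hβX : ∀ t, β t ∉ X := by
    intro t
    rcases lt_or_ge N t with h | h
    · have h1 : β t = t • w := by
        simp only [β]
        rw [p.extend_of_one_le (by rw [le_div_iff₀ (by positivity)]; linarith),
          min_eq_left h.le, max_eq_right (by linarith)]
        module
      intro hX
      have h2 := abs_le.1 (hXu _ hX)
      rw [h1, huw] at h2
      have : N * e < t * e := by gcongr
      linarith
    · rcases lt_or_ge t (-N) with h' | h'
      · have h1 : β t = t • w := by
          simp only [β]
          rw [p.extend_of_le_zero (div_nonpos_of_nonpos_of_nonneg (by linarith) (by positivity)),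
            min_eq_right (by linarith), max_eq_left (by linarith)]
          module
        intro hX
        have h2 := abs_le.1 (hXu _ hX)
        rw [h1, huw] at h2
        have : t * e < -N * e := by gcongr
        linarith
      · have h1 : β t = p.extend ((t + N) / (2 * N)) := by
          simp only [β]
          rw [min_eq_right h, max_eq_right h', sub_self, zero_smul, add_zero]
        rw [h1]
        exact connectedComponentIn_subset _ _ (hp _)
  obtain ⟨t, t', htt⟩ := crossing l β hlc hβc ((s : ℝ) • δ) w (by
    have : ((s : ℝ) • δ).1 * w.2 - ((s : ℝ) • δ).2 * w.1 = s * e := by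
      simp only [w, Prod.smul_fst, Prod.smul_snd, smul_eq_mul, he]; ring
    rw [this]; positivity) (max K (M + N * ‖w‖)) (fun t => (hK t).trans (le_max_left _ _))
    (fun t => (hβb t).trans (le_max_right _ _))
  exact hβX t' ⟨t, htt⟩

theorem drift_free (hH : ∀ z, ‖H z - z‖ ≤ C) (hQ : ∀ z, H (Q z) = H z + δ) (hδ : δ ≠ 0)
    (D : Set R2) (hD : IsPathConnected D) (hfree : ∀ z ∈ D, Q z ∉ D) (n : ℤ) (hn : n ≠ 0) :
    ∀ z ∈ D, (Q ^ n : R2 ≃ₜ R2) z ∉ D := by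
  classical
  intro z0 hz0 hz1
  have hex : ∃ s : ℕ, 0 < s ∧ ∃ z ∈ D, (Q ^ (s : ℤ) : R2 ≃ₜ R2) z ∈ D := by
    refine ⟨n.natAbs, by omega, ?_⟩
    rcases Int.natAbs_eq n with h | h
    · exact ⟨z0, hz0, by rwa [← h]⟩
    · refine ⟨_, hz1, ?_⟩
      rw [zpow_comp]
      have : (n.natAbs : ℤ) + n = 0 := by omega
      rw [this]; simpa using hz0
  obtain ⟨hs0, hs⟩ := Nat.find_spec hex
  set s := Nat.find hex
  have hdvd := hit_dvd hH hQ hδ D hD s hs0 hs (fun m hm hms h => Nat.find_min hex hms ⟨hm, h⟩)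
  obtain ⟨x, hx, hx2⟩ := hs
  obtain ⟨γ, hγ⟩ := hD.joinedIn x hx _ hx2
  have hXD : ∀ z ∈ Set.range (orbitLine (Q ^ s) γ),
      ∃ k : ℤ, ∃ d ∈ D, (Q ^ ((s : ℤ) * k) : R2 ≃ₜ R2) d = z := by
    rintro _ ⟨t, rfl⟩
    refine ⟨⌊t⌋, γ.extend (Int.fract t), hγ _, ?_⟩
    · have e : (Q ^ ((s : ℤ) * ⌊t⌋) : R2 ≃ₜ R2) = (Q ^ s) ^ ⌊t⌋ := by rw [zpow_mul, zpow_natCast]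
      rw [e]; rfl
  refine no_line hH hQ hδ s hs0 γ (by rw [zpow_natCast]) ?_
  rw [Set.disjoint_left]
  rintro _ ⟨z, hz, rfl⟩ hz2
  obtain ⟨k, d, hd, hdk⟩ := hXD _ hz
  obtain ⟨k', d', hd', hdk'⟩ := hXD _ hz2
  have h1 : (Q ^ (1 + (s : ℤ) * k - s * k') : R2 ≃ₜ R2) d = d' := by
    apply (Q ^ ((s : ℤ) * k') : R2 ≃ₜ R2).injective
    rw [hdk', zpow_comp, ← hdk]
    have : (s : ℤ) * k' + (1 + s * k - s * k') = 1 + s * k := by ring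
    rw [this, ← zpow_comp, zpow_one]
  have h2 := hdvd _ ⟨d, hd, by rwa [h1]⟩
  have h3 : (s : ℤ) ∣ 1 := by
    have e : (1 : ℤ) = (1 + s * k - s * k') - s * k + s * k' := by ring
    rw [e]
    exact (h2.sub (Dvd.intro _ rfl)).add (Dvd.intro _ rfl)
  have h4 : s = 1 := by
    have := Int.eq_one_of_dvd_one (by positivity) h3
    exact_mod_cast this
  rw [h4] at hx2
  exact hfree x hx (by simpa using hx2)

end drift3

theorem intVec_add (v w : ℤ × ℤ) : intVec (v + w) = intVec v + intVec w := by
  simp [intVec]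

theorem intVec_neg (v : ℤ × ℤ) : intVec (-v) = -intVec v := by
  simp [intVec]

theorem intVec_sub (v w : ℤ × ℤ) : intVec (v - w) = intVec v - intVec w := by
  simp [intVec]

theorem intVec_inj {v w : ℤ × ℤ} (h : intVec v = intVec w) : v = w := by
  have h1 := congrArg Prod.fst h
  have h2 := congrArg Prod.snd h
  simp only [intVec, Int.cast_inj] at h1 h2
  exact Prod.ext h1 h2

theorem pr2_add (a b : R2) : pr2 (a + b) = pr2 a + pr2 b := by
  simp [pr2]

theorem pr2_sub (a b : R2) : pr2 (a - b) = pr2 a - pr2 b := by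
  simp [pr2]

theorem pr2_eq_zero_iff (a : R2) : pr2 a = 0 ↔ ∃ v, a = intVec v := by
  rw [pr2, Prod.ext_iff]
  simp only [Prod.fst_zero, Prod.snd_zero, AddCircle.coe_eq_zero_iff]
  constructor
  · rintro ⟨⟨n, hn⟩, ⟨m, hm⟩⟩
    refine ⟨(n, m), ?_⟩
    simp [intVec, Prod.ext_iff, ← hn, ← hm]
  · rintro ⟨v, rfl⟩
    exact ⟨⟨v.1, by simp [intVec]⟩, ⟨v.2, by simp [intVec]⟩⟩

theorem pr2_eq_iff (a b : R2) : pr2 a = pr2 b ↔ ∃ v, a = b + intVec v := by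
  rw [← sub_eq_zero, ← pr2_sub, pr2_eq_zero_iff]
  simp only [sub_eq_iff_eq_add']

theorem pr2_intVec (v : ℤ × ℤ) : pr2 (intVec v) = 0 := (pr2_eq_zero_iff _).2 ⟨v, rfl⟩

theorem pr2_quot : IsOpenQuotientMap pr2 :=
  (QuotientAddGroup.isOpenQuotientMap_mk (N := AddSubgroup.zmultiples (1 : ℝ))).prodMap
    (QuotientAddGroup.isOpenQuotientMap_mk (N := AddSubgroup.zmultiples (1 : ℝ)))

theorem pr2_surj : Function.Surjective pr2 := pr2_quot.surjective

theorem equiv_sub {F : R2 → R2} (hF : Equivariant F) (z : R2) (v : ℤ × ℤ) :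
    F (z - intVec v) = F z - intVec v := by
  have := hF z (-v)
  rwa [intVec_neg, ← sub_eq_add_neg, ← sub_eq_add_neg] at this

theorem volume_pr2_ball (z : R2) (r : ℝ) (hr : 0 < r) (hr1 : r ≤ 1) :
    ENNReal.ofReal (r ^ 2) ≤ volume (pr2 '' Metric.ball z r) := by
  have hlift : ∀ (a : ℝ) (x : AddCircle (1 : ℝ)), x ∈ Metric.closedBall (a : AddCircle (1 : ℝ)) (r / 2) →
      ∃ b : ℝ, (b : AddCircle (1 : ℝ)) = x ∧ |b - a| < r := by
    intro a x hx
    obtain ⟨c, rfl⟩ := QuotientAddGroup.mk_surjective x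
    rw [mem_closedBall_iff_norm] at hx
    have hx' : ‖((c - a : ℝ) : AddCircle (1 : ℝ))‖ ≤ r / 2 := hx
    rw [AddCircle.norm_eq] at hx'
    refine ⟨c - round (c - a), ?_, ?_⟩
    · have : ((round (c - a) : ℝ) : AddCircle (1 : ℝ)) = 0 :=
        (AddCircle.coe_eq_zero_iff 1).2 ⟨round (c - a), by simp⟩
      rw [AddCircle.coe_sub, this, sub_zero]
    · simp only [inv_one, one_mul, mul_one] at hx'
      have e : c - round (c - a) - a = c - a - round (c - a) := by ring
      rw [e]
      linarith
  have hsub : (Metric.closedBall ((z.1 : ℝ) : AddCircle (1 : ℝ)) (r / 2)) ×ˢ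
      (Metric.closedBall ((z.2 : ℝ) : AddCircle (1 : ℝ)) (r / 2)) ⊆ pr2 '' Metric.ball z r := by
    rintro ⟨x, y⟩ ⟨hx, hy⟩
    obtain ⟨b, hb, hb2⟩ := hlift _ _ hx
    obtain ⟨c, hc, hc2⟩ := hlift _ _ hy
    refine ⟨(b, c), ?_, ?_⟩
    · rw [mem_ball_iff_norm, Prod.norm_def]
      exact max_lt hb2 hc2
    · simp only at hb hc
      simp [pr2, hb, hc]
  refine le_trans ?_ (measure_mono hsub)
  rw [Measure.volume_eq_prod, Measure.prod_prod, AddCircle.volume_closedBall,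
    AddCircle.volume_closedBall, ← ENNReal.ofReal_mul (by positivity)]
  apply ENNReal.ofReal_le_ofReal
  have : min 1 (2 * (r / 2)) = r := by rw [min_eq_right] <;> linarith
  rw [this]; nlinarith

theorem lift_iter {q : T2 → T2} {Q : R2 ≃ₜ R2} (hl : IsLift Q q) (k : ℕ) (z : R2) :
    pr2 ((Q ^ k : R2 ≃ₜ R2) z) = q^[k] (pr2 z) := by
  induction k generalizing z with
  | zero => rfl
  | succ k ih =>
    rw [Function.iterate_succ_apply, ← hl, ← ih, pow_succ]
    rfl

theorem equiv_pow {Q : R2 ≃ₜ R2} (hl : Equivariant Q) (k : ℕ) : Equivariant (Q ^ k : R2 ≃ₜ R2) := by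
  induction k with
  | zero => intro z v; rfl
  | succ k ih =>
    intro z v
    rw [pow_succ]
    change (Q ^ k : R2 ≃ₜ R2) (Q (z + intVec v)) = (Q ^ k : R2 ≃ₜ R2) (Q z) + intVec v
    rw [hl, ih]

theorem card_int_le (c R : ℝ) (hR : 0 ≤ R) :
    ((Finset.Icc ⌈c - R⌉ ⌊c + R⌋).card : ℝ) ≤ 2 * R + 1 := by
  rw [Int.card_Icc]
  have h1 := Int.le_ceil (c - R)
  have h2 := Int.floor_le (c + R)
  have h3 : (((⌊c + R⌋ + 1 - ⌈c - R⌉).toNat : ℤ) : ℝ) ≤ 2 * R + 1 := by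
    rw [Int.toNat_eq_max]
    push_cast
    apply max_le <;> linarith
  exact_mod_cast h3

section drift4
variable {H : R2 → R2} {C : ℝ} {Q : R2 ≃ₜ R2} {δ : R2}

theorem counting (hH : ∀ z, ‖H z - z‖ ≤ C) (hQ : ∀ z, H (Q z) = H z + δ) (hδ : δ ≠ 0)
    (q : T2 → T2) (hq : MeasurePreserving q (volume : Measure T2) volume)
    (hl : IsLift Q q) (he : Equivariant Q) (z : R2) (r : ℝ) (hr : 0 < r) (hr1 : r ≤ 1)
    (hfree : ∀ y ∈ Metric.ball z r, Q y ∉ Metric.ball z r) (N : ℕ) (hN : N * ‖δ‖ ≤ 1) :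
    N * r ^ 2 ≤ (4 * C + 5) ^ 2 := by
  classical
  have hC0 : 0 ≤ C := (norm_nonneg _).trans (hH 0)
  have hD : IsPathConnected (Metric.ball z r) :=
    (convex_ball z r).isPathConnected ⟨z, Metric.mem_ball_self hr⟩
  have hfr := drift_free hH hQ hδ _ hD hfree
  set U := pr2 '' Metric.ball z r with hU
  have hUo : IsOpen U := pr2_quot.isOpenMap _ Metric.isOpen_ball
  have hmeas : ∀ k, MeasurableSet (q^[k] ⁻¹' U) := fun k =>
    (hq.iterate k).measurable hUo.measurableSet
  have hvol : ∀ k, volume (q^[k] ⁻¹' U) = volume U := fun k =>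
    (hq.iterate k).measure_preimage hUo.measurableSet.nullMeasurableSet
  have hcount : ∀ y : T2, (((Finset.range N).filter fun k => q^[k] y ∈ U).card : ℝ)
      ≤ (4 * C + 5) ^ 2 := by
    intro y
    obtain ⟨x, rfl⟩ := pr2_surj y
    have hch : ∀ k : ℕ, ∃ v : ℤ × ℤ, q^[k] (pr2 x) ∈ U →
        (Q ^ k : R2 ≃ₜ R2) (x - intVec v) ∈ Metric.ball z r := by
      intro k
      by_cases h : q^[k] (pr2 x) ∈ U
      · obtain ⟨d, hd, hd2⟩ := h
        rw [← lift_iter hl, eq_comm, pr2_eq_iff] at hd2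
        obtain ⟨v, hv⟩ := hd2
        refine ⟨v, fun _ => ?_⟩
        rw [equiv_sub (equiv_pow he k), hv, add_sub_cancel_right]
        exact hd
      · exact ⟨0, fun h' => absurd h' h⟩
    choose v hv using hch
    set R := 2 * C + 2 with hR
    have hcard : ((Finset.range N).filter fun k => q^[k] (pr2 x) ∈ U).card ≤
        ((Finset.Icc ⌈(x.1 - z.1) - R⌉ ⌊(x.1 - z.1) + R⌋) ×ˢ
          (Finset.Icc ⌈(x.2 - z.2) - R⌉ ⌊(x.2 - z.2) + R⌋)).card := by
      refine Finset.card_le_card_of_injOn v ?_ ?_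
      · intro k hk
        have hk' := Finset.mem_filter.1 (Finset.mem_coe.1 hk)
        have h1 := hv k hk'.2
        have h2 := drift_bound hH hQ k (x - intVec (v k))
        rw [zpow_natCast] at h2
        rw [mem_ball_iff_norm] at h1
        have h3 : ‖((k : ℤ) : ℝ) • δ‖ ≤ 1 := by
          rw [norm_smul]
          refine le_trans ?_ hN
          gcongr
          simpa using (Finset.mem_range.1 hk'.1).le
        have h4 : ‖(x - z) - intVec (v k)‖ ≤ R := by
          have e : (x - z) - intVec (v k) = ((Q ^ k : R2 ≃ₜ R2) (x - intVec (v k)) - z) -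
            ((Q ^ k : R2 ≃ₜ R2) (x - intVec (v k)) - (x - intVec (v k)) - ((k : ℤ) : ℝ) • δ) -
            ((k : ℤ) : ℝ) • δ := by abel
          rw [e]
          have := norm_sub_le (((Q ^ k : R2 ≃ₜ R2) (x - intVec (v k)) - z) -
            ((Q ^ k : R2 ≃ₜ R2) (x - intVec (v k)) - (x - intVec (v k)) - ((k : ℤ) : ℝ) • δ))
            (((k : ℤ) : ℝ) • δ)
          have := norm_sub_le ((Q ^ k : R2 ≃ₜ R2) (x - intVec (v k)) - z)
            ((Q ^ k : R2 ≃ₜ R2) (x - intVec (v k)) - (x - intVec (v k)) - ((k : ℤ) : ℝ) • δ)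
          linarith
        have h5 := abs_le.1 ((norm_fst_le _).trans h4)
        have h6 := abs_le.1 ((norm_snd_le _).trans h4)
        simp only [Prod.fst_sub, Prod.snd_sub, intVec] at h5 h6
        simp only [Finset.coe_product, Set.mem_prod, Finset.coe_Icc, Set.mem_Icc, Int.ceil_le,
          Int.le_floor]
        refine ⟨⟨?_, ?_⟩, ?_, ?_⟩ <;> linarith [h5.1, h5.2, h6.1, h6.2]
      · intro k hk k' hk' hkk
        have hk1 := hv k (Finset.mem_filter.1 (Finset.mem_coe.1 hk)).2
        have hk1' := hv k' (Finset.mem_filter.1 (Finset.mem_coe.1 hk')).2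
        by_contra hne
        refine hfr ((k' : ℤ) - k) (by omega) _ hk1 ?_
        rw [← zpow_natCast, zpow_comp, sub_add_cancel, hkk, zpow_natCast]
        exact hk1'
    have hc1 := card_int_le (x.1 - z.1) R (by positivity)
    have hc2 := card_int_le (x.2 - z.2) R (by positivity)
    rw [Finset.card_product] at hcard
    have hcard' : (((Finset.range N).filter fun k => q^[k] (pr2 x) ∈ U).card : ℝ) ≤
      (Finset.Icc ⌈(x.1 - z.1) - R⌉ ⌊(x.1 - z.1) + R⌋).card *
          (Finset.Icc ⌈(x.2 - z.2) - R⌉ ⌊(x.2 - z.2) + R⌋).card := by exact_mod_cast hcard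
    refine hcard'.trans ?_
    have : (4 * C + 5) ^ 2 = (2 * R + 1) * (2 * R + 1) := by rw [hR]; ring
    rw [this]
    gcongr
  have hsum : ∑ k ∈ Finset.range N, volume (q^[k] ⁻¹' U) ≤ ENNReal.ofReal ((4 * C + 5) ^ 2) := by
    calc ∑ k ∈ Finset.range N, volume (q^[k] ⁻¹' U)
        = ∑ k ∈ Finset.range N, ∫⁻ y : T2, (q^[k] ⁻¹' U).indicator 1 y := by
          refine Finset.sum_congr rfl fun k _ => ?_
          rw [lintegral_indicator_one (hmeas k)]
      _ = ∫⁻ y : T2, ∑ k ∈ Finset.range N, (q^[k] ⁻¹' U).indicator 1 y := by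
          rw [lintegral_finsetSum]
          exact fun k _ => measurable_one.indicator (hmeas k)
      _ ≤ ∫⁻ _ : T2, ENNReal.ofReal ((4 * C + 5) ^ 2) := by
          refine lintegral_mono fun y => ?_
          have : ∑ k ∈ Finset.range N, (q^[k] ⁻¹' U).indicator (1 : T2 → ENNReal) y =
            (((Finset.range N).filter fun k => q^[k] y ∈ U).card : ENNReal) := by
            rw [Finset.card_filter]
            push_cast
            refine Finset.sum_congr rfl fun k _ => ?_
            simp [Set.indicator_apply]
          simp only [this]
          rw [← ENNReal.ofReal_natCast]
          exact ENNReal.ofReal_le_ofReal (hcount y)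
      _ = ENNReal.ofReal ((4 * C + 5) ^ 2) := by
          rw [lintegral_const, Measure.volume_eq_prod, ← Set.univ_prod_univ, Measure.prod_prod]
          simp [AddCircle.measure_univ]
  simp only [hvol, Finset.sum_const, Finset.card_range, nsmul_eq_mul] at hsum
  have h1 : (N : ENNReal) * ENNReal.ofReal (r ^ 2) ≤ ENNReal.ofReal ((4 * C + 5) ^ 2) :=
    le_trans (by gcongr; exact volume_pr2_ball z r hr hr1) hsum
  rw [← ENNReal.ofReal_natCast, ← ENNReal.ofReal_mul (by positivity)] at h1
  exact (ENNReal.ofReal_le_ofReal_iff (by positivity)).1 h1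

theorem free_ball_bound (hH : ∀ z, ‖H z - z‖ ≤ C) (hQ : ∀ z, H (Q z) = H z + δ) (hδ : δ ≠ 0)
    (q : T2 → T2) (hq : MeasurePreserving q (volume : Measure T2) volume)
    (hl : IsLift Q q) (he : Equivariant Q) (z : R2) (r : ℝ) (hr : 0 < r) (hr1 : r ≤ 1)
    (hfree : ∀ y ∈ Metric.ball z r, Q y ∉ Metric.ball z r) (hδ1 : ‖δ‖ ≤ 1) :
    r ^ 2 ≤ 2 * (4 * C + 5) ^ 2 * ‖δ‖ := by
  have hp : 0 < ‖δ‖ := norm_pos_iff.2 hδ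
  have h0 : (⌊1 / ‖δ‖⌋₊ : ℝ) ≤ 1 / ‖δ‖ := Nat.floor_le (by positivity)
  have h1 := counting hH hQ hδ q hq hl he z r hr hr1 hfree ⌊1 / ‖δ‖⌋₊ (by
    rwa [le_div_iff₀ hp] at h0)
  have h2 : 1 / ‖δ‖ < ⌊1 / ‖δ‖⌋₊ + 1 := Nat.lt_floor_add_one _
  have h3 : (1 : ℝ) ≤ ⌊1 / ‖δ‖⌋₊ := by
    have : 1 ≤ ⌊1 / ‖δ‖⌋₊ := by
      apply Nat.le_floor
      rw [le_div_iff₀ hp]; simpa using hδ1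
    exact_mod_cast this
  have h4 : 1 < 2 * (⌊1 / ‖δ‖⌋₊ : ℝ) * ‖δ‖ := by
    rw [div_lt_iff₀ hp] at h2
    nlinarith
  have h5 : 0 ≤ r ^ 2 := sq_nonneg r
  calc r ^ 2 ≤ r ^ 2 * (2 * (⌊1 / ‖δ‖⌋₊ : ℝ) * ‖δ‖) := by nlinarith
    _ = 2 * (⌊1 / ‖δ‖⌋₊ * r ^ 2) * ‖δ‖ := by ring
    _ ≤ _ := by gcongr

end drift4

theorem descend {E : Type*} [TopologicalSpace E] (η : R2 → E) (hη : Continuous η)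
    (hp : ∀ z v, η (z + intVec v) = η z) : ∃ φ : T2 → E, Continuous φ ∧ ∀ z, φ (pr2 z) = η z := by
  have hfac : ∀ a b, pr2 a = pr2 b → η a = η b := by
    intro a b h
    obtain ⟨v, rfl⟩ := (pr2_eq_iff a b).1 h
    exact hp b v
  refine ⟨fun x => η (Function.surjInv pr2_surj x), ?_, fun z => ?_⟩
  · rw [pr2_quot.isQuotientMap.continuous_iff]
    have : (fun x => η (Function.surjInv pr2_surj x)) ∘ pr2 = η := by
      funext z
      exact hfac _ _ (Function.surjInv_eq pr2_surj _)
    rwa [this]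
  · exact hfac _ _ (Function.surjInv_eq pr2_surj _)

theorem periodic_bounded {E : Type*} [NormedAddCommGroup E] (η : R2 → E) (hη : Continuous η)
    (hp : ∀ z v, η (z + intVec v) = η z) : ∃ C, ∀ z, ‖η z‖ ≤ C := by
  obtain ⟨φ, hφ, hφη⟩ := descend η hη hp
  obtain ⟨C, hC⟩ := (isCompact_range hφ).isBounded.exists_norm_le
  exact ⟨C, fun z => hφη z ▸ hC _ ⟨_, rfl⟩⟩

theorem pr2_dist_le (a b : R2) : dist (pr2 a) (pr2 b) ≤ dist a b := by
  have h : ∀ x y : ℝ, dist (x : AddCircle (1 : ℝ)) (y : AddCircle (1 : ℝ)) ≤ dist x y := by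
    intro x y
    rw [dist_eq_norm, dist_eq_norm, ← AddCircle.coe_sub]
    exact QuotientAddGroup.norm_mk_le_norm
  exact max_le_max (h _ _) (h _ _)

theorem periodic_unif {E : Type*} [NormedAddCommGroup E] (η : R2 → E) (hη : Continuous η)
    (hp : ∀ z v, η (z + intVec v) = η z) (ε : ℝ) (hε : 0 < ε) :
    ∃ d > 0, ∀ a b, ‖a - b‖ < d → ‖η a - η b‖ < ε := by
  obtain ⟨φ, hφ, hφη⟩ := descend η hη hp
  obtain ⟨d, hd, h⟩ := Metric.uniformContinuous_iff.1
    (CompactSpace.uniformContinuous_of_continuous hφ) ε hε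
  refine ⟨d, hd, fun a b hab => ?_⟩
  rw [← dist_eq_norm, ← hφη, ← hφη]
  apply h
  refine (pr2_dist_le a b).trans_lt ?_
  rwa [dist_eq_norm]

theorem int_valued_const (Φ : R2 → R2) (hΦ : Continuous Φ) (h : ∀ z, ∃ v, Φ z = intVec v) :
    ∃ v, ∀ z, Φ z = intVec v := by
  choose v hv using h
  have hemb : IsEmbedding intVec := 
    Int.isClosedEmbedding_coe_real.isEmbedding.prodMap Int.isClosedEmbedding_coe_real.isEmbedding
  have hvc : Continuous v := by
    rw [hemb.continuous_iff]
    have : intVec ∘ v = Φ := by funext z; exact (hv z).symm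
    rwa [this]
  refine ⟨v 0, fun z => ?_⟩
  rw [hv z, PreconnectedSpace.constant inferInstance hvc (x := z) (y := 0)]

theorem lift_unique {F F' : R2 → R2} {f : T2 → T2} (hF : Continuous F) (hF' : Continuous F')
    (hl : IsLift F f) (hl' : IsLift F' f) : ∃ v, ∀ z, F' z = F z + intVec v := by
  obtain ⟨v, hv⟩ := int_valued_const (fun z => F' z - F z) (hF'.sub hF) (fun z => by
    obtain ⟨v, hv⟩ := (pr2_eq_iff (F' z) (F z)).1 (by rw [hl, hl'])
    exact ⟨v, by simp [hv]⟩)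
  exact ⟨v, fun z => by rw [← hv z]; simp⟩

/-- Composition of a homeomorphism with an integer translation. -/
def shiftH (Q : R2 ≃ₜ R2) (p : ℤ × ℤ) : R2 ≃ₜ R2 := Q.trans (Homeomorph.subRight (intVec p))

theorem shiftH_apply (Q : R2 ≃ₜ R2) (p : ℤ × ℤ) (z : R2) : shiftH Q p z = Q z - intVec p := rfl

theorem shiftH_lift {Q : R2 ≃ₜ R2} {q : T2 → T2} (h : IsLift Q q) (p : ℤ × ℤ) :
    IsLift (shiftH Q p) q := fun z => by
  rw [shiftH_apply, pr2_sub, pr2_intVec, sub_zero, h]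

theorem shiftH_equiv {Q : R2 ≃ₜ R2} (h : Equivariant Q) (p : ℤ × ℤ) :
    Equivariant (shiftH Q p) := fun z v => by
  rw [shiftH_apply, shiftH_apply, h]; abel

theorem shiftH_drift {H : R2 → R2} {Q : R2 ≃ₜ R2} {δ : R2} (hH : Equivariant H)
    (hQ : ∀ z, H (Q z) = H z + δ) (p : ℤ × ℤ) (z : R2) :
    H (shiftH Q p z) = H z + (δ - intVec p) := by
  rw [shiftH_apply, equiv_sub hH, hQ]; abel

theorem equivariant_periodic {F : R2 → R2} (hF : Equivariant F) (z : R2) (v : ℤ × ℤ) :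
    F (z + intVec v) - (z + intVec v) = F z - z := by
  rw [hF]; abel

theorem lip_pow {F : R2 ≃ₜ R2} {L : ℝ} (hL0 : 0 ≤ L) (hL : ∀ a b, ‖F a - F b‖ ≤ L * ‖a - b‖)
    (n : ℕ) (a b : R2) :
    ‖(F ^ n : R2 ≃ₜ R2) a - (F ^ n : R2 ≃ₜ R2) b‖ ≤ L ^ n * ‖a - b‖ := by
  induction n with
  | zero => simp
  | succ n ih =>
    rw [pow_succ']
    refine (hL _ _).trans ?_
    rw [pow_succ', mul_assoc]
    gcongr
    exact ih

theorem setup (r : ℕ∞) (hr : 2 ≤ r) (f : T2 → T2) (ω : R2) (w : T2) (hw : pr2 ω = w)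
    (hiso : IsotopicToId f) (hcr : IsCrDiffeo r f) (hsc : RegSemiConj f w) :
    ∃ (H : R2 → R2) (C : ℝ) (F : R2 ≃ₜ R2) (L : ℝ), Continuous H ∧ Equivariant H ∧
      (∀ z, ‖H z - z‖ ≤ C) ∧ IsLift F f ∧ Equivariant F ∧ (∀ z, H (F z) = H z + ω) ∧
      1 ≤ L ∧ ∀ a b, ‖F a - F b‖ ≤ L * ‖a - b‖ := by
  obtain ⟨h, -, -, ⟨H, hHc, hHl, hHe⟩, hconj⟩ := hsc
  obtain ⟨-, F0, hF0, hF0l, hF0e⟩ := hiso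
  obtain ⟨C, hC⟩ := periodic_bounded (fun z => H z - z) (hHc.sub continuous_id)
    (equivariant_periodic hHe)
  let F1 : R2 ≃ₜ R2 := hF0.homeomorph
  have hF1 : ∀ z, F1 z = F0 z := fun z => rfl
  obtain ⟨v, hv⟩ := int_valued_const (fun z => H (F1 z) - (H z + ω))
    ((hHc.comp F1.continuous).sub (hHc.add continuous_const)) (fun z => by
      obtain ⟨v, hv⟩ := (pr2_eq_iff (H (F1 z)) (H z + ω)).1 (by
        rw [hHl, hF1, hF0l, hconj, pr2_add, hHl, hw])
      exact ⟨v, by rw [hv]; abel⟩)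
  have hF1l : IsLift F1 f := hF0l
  have hF1e : Equivariant F1 := hF0e
  have hFl := shiftH_lift hF1l v
  have hFe := shiftH_equiv hF1e v
  obtain ⟨F', G', hF'l, -, -, hF's, -⟩ := hcr
  obtain ⟨u, hu⟩ := lift_unique hF's.continuous (shiftH F1 v).continuous hF'l hFl
  have hFs : ContDiff ℝ 1 (shiftH F1 v) := by
    have : (shiftH F1 v : R2 → R2) = fun z => F' z + intVec u := funext hu
    rw [this]
    have h1 : (1 : WithTop ℕ∞) ≤ (r : WithTop ℕ∞) := by
      have : (1 : ℕ∞) ≤ r := le_trans (by norm_num) hr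
      exact_mod_cast this
    exact (hF's.of_le h1).add contDiff_const
  obtain ⟨L, hL⟩ := periodic_bounded (fun z => fderiv ℝ (shiftH F1 v) z)
    (hFs.continuous_fderiv one_ne_zero) (fun z k => by
      rw [← fderiv_comp_add_right]
      have : (fun x => shiftH F1 v (x + intVec k)) = fun x => shiftH F1 v x + intVec k :=
        funext fun x => hFe x k
      rw [this, fderiv_add_const])
  refine ⟨H, C, shiftH F1 v, max 1 L, hHc, hHe, hC, hFl, hFe, ?_, le_max_left _ _, ?_⟩
  · intro z
    have h1 := hv z
    rw [shiftH_apply, equiv_sub hHe]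
    rw [← h1]; abel
  · intro a b
    refine (convex_univ.norm_image_sub_le_of_norm_fderiv_le (𝕜 := ℝ) (f := shiftH F1 v) (C := max 1 L)
      (fun x _ => (hFs.differentiable one_ne_zero) x)
      (fun x _ => (hL x).trans (le_max_right _ _)) (Set.mem_univ b) (Set.mem_univ a))

theorem norm_le_enorm2 (v : R2) : ‖v‖ ≤ enorm2 v := by
  rw [Prod.norm_def, enorm2]
  refine max_le ?_ ?_
  · exact Real.abs_le_sqrt (by nlinarith [sq_nonneg v.2])
  · exact Real.abs_le_sqrt (by nlinarith [sq_nonneg v.1])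

theorem delta_ne {ω : R2} (hti : TotallyIrrationalVec ω) (n : ℕ) (hn : 0 < n) (p : ℤ × ℤ) :
    (n : ℝ) • ω - intVec p ≠ 0 := by
  intro h
  have h1 := congrArg Prod.fst h
  simp only [Prod.fst_sub, Prod.smul_fst, smul_eq_mul, intVec, Prod.fst_zero] at h1
  have := (hti n 0 (-p.1) (by push_cast; linarith)).1
  omega

theorem rigidity {H : R2 → R2} {C : ℝ} {F : R2 ≃ₜ R2} {L : ℝ} {f : T2 → T2} {ω : R2}
    (hHe : Equivariant H) (hH : ∀ z, ‖H z - z‖ ≤ C) (hFl : IsLift F f) (hFe : Equivariant F)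
    (hF : ∀ z, H (F z) = H z + ω) (hL1 : 1 ≤ L) (hL : ∀ a b, ‖F a - F b‖ ≤ L * ‖a - b‖)
    (hmp : MeasurePreserving f (volume : Measure T2) volume)
    (hti : TotallyIrrationalVec ω) (hsl : SuperLiouville ω) (ε : ℝ) (hε : 0 < ε) (hε1 : ε ≤ 1) :
    ∃ (n : ℕ) (p : ℤ × ℤ), 0 < n ∧ ‖(n : ℝ) • ω - intVec p‖ < ε ∧
      ∀ z, ‖shiftH (F ^ n) p z - z‖ < ε := by
  have hC0 : 0 ≤ C := (norm_nonneg _).trans (hH 0)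
  set K := 2 * (4 * C + 5) ^ 2 with hK
  have hK0 : 0 < K := by positivity
  set θ := min (ε ^ 2 / (4 * K)) (min ε (1 / 2)) with hθ
  have hθ0 : 0 < θ := by positivity
  have hθ1 : θ ≤ ε ^ 2 / (4 * K) := min_le_left _ _
  have hθ2 : θ ≤ ε := (min_le_right _ _).trans (min_le_left _ _)
  have hθ3 : θ ≤ 1 / 2 := (min_le_right _ _).trans (min_le_right _ _)
  have hL0 : 0 < L := by linarith
  set M := Real.log θ - 2 * Real.log L with hM
  have hlogL : 0 ≤ Real.log L := Real.log_nonneg hL1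
  have hlogθ : Real.log θ < 0 := Real.log_neg hθ0 (by linarith)
  obtain ⟨n, hn⟩ := (hsl M).exists
  have hn0 : 0 < n := by
    rcases Nat.eq_zero_or_pos n with rfl | h
    · simp at hn; linarith
    · exact h
  have hnR : (0 : ℝ) < n := by exact_mod_cast hn0
  have hlog : Real.log (normT2 ((n : ℝ) • ω)) < n * M := by
    rwa [inv_mul_lt_iff₀ hnR] at hn
  have hnorm0 : 0 ≤ normT2 ((n : ℝ) • ω) := Real.iInf_nonneg fun v => Real.sqrt_nonneg _
  have hnormpos : 0 < normT2 ((n : ℝ) • ω) := by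
    rcases hnorm0.eq_or_lt with h | h
    · rw [← h, Real.log_zero] at hlog
      nlinarith
    · exact h
  have hlt : normT2 ((n : ℝ) • ω) < θ ^ n / (L ^ n) ^ 2 := by
    rw [← Real.log_lt_log_iff hnormpos (by positivity)]
    refine hlog.trans_le (le_of_eq ?_)
    rw [Real.log_div (by positivity) (by positivity), Real.log_pow, Real.log_pow, Real.log_pow, hM]
    push_cast; ring
  obtain ⟨p, hp⟩ := exists_lt_of_ciInf_lt hlt
  have hδ : ‖(n : ℝ) • ω - intVec p‖ < θ / (L ^ n) ^ 2 := by
    refine ((norm_le_enorm2 _).trans_lt hp).trans_le ?_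
    gcongr
    exact pow_le_of_le_one hθ0.le (by linarith) hn0.ne'
  have hLn : 1 ≤ L ^ n := one_le_pow₀ hL1
  have hδθ : ‖(n : ℝ) • ω - intVec p‖ < θ :=
    hδ.trans_le (div_le_self hθ0.le (one_le_pow₀ hLn))
  refine ⟨n, p, hn0, by linarith, fun z => ?_⟩
  by_contra hcon
  push Not at hcon
  have hFn : ∀ z, H ((F ^ n : R2 ≃ₜ R2) z) = H z + (n : ℝ) • ω := fun z => by
    have := drift_zpow hF n z
    simpa using this
  set ρ := ε / (2 * L ^ n) with hρ
  have hρ0 : 0 < ρ := by positivity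
  have hρL : 2 * L ^ n * ρ = ε := by rw [hρ]; field_simp
  have hfin := free_ball_bound hH (shiftH_drift hHe hFn p) (delta_ne hti n hn0 p) (f^[n])
    (hmp.iterate n) (shiftH_lift (fun z => lift_iter hFl n z) p)
    (shiftH_equiv (equiv_pow hFe n) p) z ρ hρ0 (by nlinarith) (by
      intro y hy hy2
      rw [mem_ball_iff_norm] at hy hy2
      have h1 : ‖shiftH (F ^ n) p y - shiftH (F ^ n) p z‖ ≤ L ^ n * ‖y - z‖ := by
        rw [shiftH_apply, shiftH_apply, sub_sub_sub_cancel_right]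
        exact lip_pow hL0.le hL n y z
      have h2 : L ^ n * ‖y - z‖ ≤ L ^ n * ρ := by gcongr
      have h3 := norm_sub_le (shiftH (F ^ n) p y - z) (shiftH (F ^ n) p y - shiftH (F ^ n) p z)
      rw [sub_sub_sub_cancel_left] at h3
      nlinarith) (by linarith)
  rw [← hK] at hfin
  have h5 : K * ‖(n : ℝ) • ω - intVec p‖ < ρ ^ 2 := by
    have : ρ ^ 2 = ε ^ 2 / (4 * K) / (L ^ n) ^ 2 * K := by rw [hρ]; field_simp; ring
    rw [this, mul_comm]
    gcongr
    refine hδ.trans_le ?_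
    gcongr
  linarith

theorem parallel_eq {ω : R2} (hti : TotallyIrrationalVec ω) (n n' : ℕ) (p p' : ℤ × ℤ)
    (h : ((n : ℝ) • ω - intVec p).1 * ((n' : ℝ) • ω - intVec p').2 -
      ((n : ℝ) • ω - intVec p).2 * ((n' : ℝ) • ω - intVec p').1 = 0) :
    (n' : ℝ) • intVec p = (n : ℝ) • intVec p' := by
  simp only [Prod.fst_sub, Prod.snd_sub, Prod.smul_fst, Prod.smul_snd, smul_eq_mul, intVec] at h
  obtain ⟨h1, h2, -⟩ := hti (n' * p.2 - n * p'.2) (n * p'.1 - n' * p.1) (p.1 * p'.2 - p.2 * p'.1)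
    (by push_cast; linear_combination h)
  have h1' : (n' : ℝ) * p.2 = n * p'.2 := by
    have : (n' : ℤ) * p.2 = n * p'.2 := by linarith
    exact_mod_cast this
  have h2' : (n' : ℝ) * p.1 = n * p'.1 := by
    have : (n' : ℤ) * p.1 = n * p'.1 := by linarith
    exact_mod_cast this
  ext
  · simpa [intVec] using h2'
  · simpa [intVec] using h1'

theorem invariant_zpow {ψ : R2 → R2} {P : R2 ≃ₜ R2} (h : ∀ z, ψ (P z) = ψ z) (k : ℤ) (z : R2) :
    ψ ((P ^ k : R2 ≃ₜ R2) z) = ψ z := by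
  have := drift_zpow (H := ψ) (Q := P) (δ := 0) (fun z => by rw [h, add_zero]) k z
  simpa using this

theorem near_line {H : R2 → R2} {C : ℝ} {P : R2 ≃ₜ R2} {δ : R2} (hH : ∀ z, ‖H z - z‖ ≤ C)
    (hP : ∀ z, H (P z) = H z + δ) {ψ : R2 → R2} (hψ : ∀ z, ψ (P z) = ψ z) {d ε : ℝ}
    (hd : ∀ a b, ‖a - b‖ < d → ‖ψ a - ψ b‖ < ε) (hPd : ∀ z, ‖P z - z‖ < d) (x : R2) :
    ∃ (l : ℝ → R2) (K : ℝ), Continuous l ∧ (∀ t, ‖l t - t • δ‖ ≤ K) ∧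
      ∀ t, ‖ψ (l t) - ψ x‖ < ε := by
  let γ : Path x (P x) :=
    { toFun := fun s => x + (s : ℝ) • (P x - x)
      continuous_toFun := by fun_prop
      source' := by simp
      target' := by simp }
  obtain ⟨K, hK⟩ := orbitLine_bound hH hP γ
  refine ⟨orbitLine P γ, K, orbitLine_continuous P γ rfl, hK, fun t => ?_⟩
  rw [orbitLine, invariant_zpow hψ]
  apply hd
  have h0 : 0 ≤ Int.fract t := Int.fract_nonneg t
  have h1 : Int.fract t ≤ 1 := (Int.fract_lt_one t).le
  rw [γ.extend_apply ⟨h0, h1⟩]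
  change ‖x + (Int.fract t) • (P x - x) - x‖ < d
  rw [add_sub_cancel_left, norm_smul, Real.norm_eq_abs, abs_of_nonneg h0]
  exact (mul_le_of_le_one_left (norm_nonneg _) h1).trans_lt (hPd x)

theorem inv_const {H : R2 → R2} {C : ℝ} {F : R2 ≃ₜ R2} {ω : R2}
    (hHe : Equivariant H) (hH : ∀ z, ‖H z - z‖ ≤ C)
    (hF : ∀ z, H (F z) = H z + ω) (hti : TotallyIrrationalVec ω)
    (hrig : ∀ ε : ℝ, 0 < ε → ε ≤ 1 → ∃ (n : ℕ) (p : ℤ × ℤ), 0 < n ∧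
      ‖(n : ℝ) • ω - intVec p‖ < ε ∧ ∀ z, ‖shiftH (F ^ n) p z - z‖ < ε)
    (ψ : R2 → R2) (hψc : Continuous ψ) (hψp : ∀ z v, ψ (z + intVec v) = ψ z)
    (hψF : ∀ z, ψ (F z) = ψ z) (x x' : R2) : ψ x = ψ x' := by
  by_contra hne
  set ε := ‖ψ x - ψ x'‖ / 2 with hε
  have hε0 : 0 < ε := by
    have := norm_pos_iff.2 (sub_ne_zero.2 hne)
    positivity
  obtain ⟨d, hd0, hd⟩ := periodic_unif ψ hψc hψp ε hε0
  have hFn : ∀ (n : ℕ) z, H ((F ^ n : R2 ≃ₜ R2) z) = H z + (n : ℝ) • ω := fun n z => by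
    have := drift_zpow hF n z
    simpa using this
  have hψP : ∀ (n : ℕ) (p : ℤ × ℤ) z, ψ (shiftH (F ^ n) p z) = ψ z := fun n p z => by
    rw [shiftH_apply, sub_eq_add_neg, ← intVec_neg, hψp]
    have := invariant_zpow hψF n z
    simpa using this
  obtain ⟨n, p, hn, hnp, hnz⟩ := hrig (min d 1) (by positivity) (min_le_right _ _)
  have hδ := delta_ne hti n hn p
  set δ := (n : ℝ) • ω - intVec p with hδdef
  have hδ0 : 0 < ‖δ‖ := norm_pos_iff.2 hδ
  have hnR : (1 : ℝ) ≤ n := by exact_mod_cast hn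
  obtain ⟨n', p', hn', hnp', hnz'⟩ := hrig (min (min d 1) (‖δ‖ / n)) (by positivity)
    ((min_le_left _ _).trans (min_le_right _ _))
  set δ' := (n' : ℝ) • ω - intVec p' with hδdef'
  have hnR' : (1 : ℝ) ≤ n' := by exact_mod_cast hn'
  obtain ⟨l, K, hlc, hlK, hlψ⟩ := near_line hH (shiftH_drift hHe (hFn n) p) (hψP n p) hd
    (fun z => (hnz z).trans_le (min_le_left _ _)) x
  obtain ⟨l', K', hlc', hlK', hlψ'⟩ := near_line hH (shiftH_drift hHe (hFn n') p') (hψP n' p') hd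
    (fun z => (hnz' z).trans_le ((min_le_left _ _).trans (min_le_left _ _))) x'
  have hcross : δ.1 * δ'.2 - δ.2 * δ'.1 ≠ 0 := by
    intro h0
    have h1 := parallel_eq hti n n' p p' h0
    have h2 : (n' : ℝ) • δ = (n : ℝ) • δ' := by
      rw [hδdef, hδdef', smul_sub, smul_sub, h1, smul_comm]
    have h3 := congrArg norm h2
    rw [norm_smul, norm_smul, Real.norm_natCast, Real.norm_natCast] at h3
    have h4 : ‖δ'‖ < ‖δ‖ / n := hnp'.trans_le (min_le_right _ _)
    rw [lt_div_iff₀ (by linarith)] at h4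
    nlinarith
  obtain ⟨s, t, hst⟩ := crossing l l' hlc hlc' δ δ' hcross (max K K')
    (fun t => (hlK t).trans (le_max_left _ _)) (fun t => (hlK' t).trans (le_max_right _ _))
  have h1 := hlψ s
  have h2 := hlψ' t
  rw [← hst] at h2
  have h3 := norm_sub_le (ψ (l s) - ψ x') (ψ (l s) - ψ x)
  rw [sub_sub_sub_cancel_left] at h3
  linarith

theorem vol_univ_T2 : (volume : Measure T2) Set.univ = 1 := by
  rw [Measure.volume_eq_prod, ← Set.univ_prod_univ, Measure.prod_prod]
  simp [AddCircle.measure_univ]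

theorem main_aux
    (r : ℕ∞) (hr : 2 ≤ r)
    (f g : T2 → T2) (ω : R2) (w : T2)
    (hw : pr2 ω = w)
    (hti : TotallyIrrationalVec ω)
    (hsl : SuperLiouville ω)
    (hiso : IsotopicToId f)
    (hcr : IsCrDiffeo r f)
    (hmp : MeasurePreserving f (volume : Measure T2) volume)
    (hsc : RegSemiConj f w)
    (hisog : IsotopicToId g)
    (hmpg : MeasurePreserving g (volume : Measure T2) volume)
    (hcomm : g ∘ f = f ∘ g)
    (hρ : IsRotOf g 0) :
    g = id := by
  obtain ⟨H, C, F, L, hHc, hHe, hH, hFl, hFe, hF, hL1, hL⟩ := setup r hr f ω w hw hiso hcr hsc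
  have hrig := rigidity hHe hH hFl hFe hF hL1 hL hmp hti hsl
  obtain ⟨-, G1, hG1, hG1l, hG1e⟩ := hisog
  obtain ⟨G0, Φ, hG0c, hG0l, hG0e, hΦ, hrotv⟩ := hρ
  obtain ⟨v0, hv0⟩ := lift_unique hG0c hG1.continuous hG0l hG1l
  let G1h : R2 ≃ₜ R2 := hG1.homeomorph
  have hG1hl : IsLift G1h g := hG1l
  have hG1he : Equivariant G1h := hG1e
  let G : R2 ≃ₜ R2 := shiftH G1h v0
  have hGG0 : ∀ z, G z = G0 z := fun z => by
    change G1 z - intVec v0 = G0 z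
    rw [hv0]; abel
  have hGl : IsLift G g := shiftH_lift hG1hl v0
  have hGe : Equivariant G := shiftH_equiv hG1he v0
  let ψ : R2 → R2 := fun z => H (G z) - H z
  have hψc : Continuous ψ := (hHc.comp G.continuous).sub hHc
  have hψp : ∀ z v, ψ (z + intVec v) = ψ z := fun z v => by
    simp only [ψ]; rw [hGe, hHe, hHe]; abel
  obtain ⟨v, hv⟩ := lift_unique (f := f ∘ g) (F.continuous.comp G.continuous)
    (G.continuous.comp F.continuous)
    (fun z => by simp only [Function.comp]; rw [hFl, hGl])
    (fun z => by rw [← hcomm]; simp only [Function.comp]; rw [hGl, hFl])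
  simp only [Function.comp] at hv
  have hψF' : ∀ z, ψ (F z) = ψ z + intVec v := fun z => by
    simp only [ψ]; rw [hv, hHe, hF, hF]; abel
  have hv00 : intVec v = 0 := by
    obtain ⟨B, hB⟩ := periodic_bounded ψ hψc hψp
    by_contra hne
    have hpos := norm_pos_iff.2 hne
    obtain ⟨n, hn⟩ := exists_nat_gt (2 * B / ‖intVec v‖)
    rw [div_lt_iff₀ hpos] at hn
    have h1 := drift_zpow hψF' n 0
    have h2 : ((n : ℤ) : ℝ) • intVec v = ψ ((F ^ (n : ℤ) : R2 ≃ₜ R2) 0) - ψ 0 := by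
      rw [h1]; abel
    have h3 := congrArg norm h2
    rw [norm_smul, Int.cast_natCast, Real.norm_natCast] at h3
    have h4 := norm_sub_le (ψ ((F ^ (n : ℤ) : R2 ≃ₜ R2) 0)) (ψ 0)
    linarith [hB ((F ^ (n : ℤ) : R2 ≃ₜ R2) 0), hB 0]
  have hψF : ∀ z, ψ (F z) = ψ z := fun z => by rw [hψF', hv00, add_zero]
  have hconst := inv_const hHe hH hF hti hrig ψ hψc hψp hψF
  set c := ψ 0 with hc
  have hψc' : ∀ z, ψ z = c := fun z => hconst z 0
  obtain ⟨φ, hφc, hφ⟩ := descend (fun z => H z - z) (hHc.sub continuous_id)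
    (equivariant_periodic hHe)
  have hΦeq : ∀ x, Φ x = c - (φ (g x) - φ x) := by
    intro x
    obtain ⟨z, rfl⟩ := pr2_surj x
    rw [hΦ, ← hGl, hφ, hφ, ← hψc' z, ← hGG0]
    simp only [ψ]; abel
  have : IsProbabilityMeasure (volume : Measure T2) := ⟨vol_univ_T2⟩
  have hφint : Integrable φ (volume : Measure T2) :=
    hφc.integrable_of_hasCompactSupport (HasCompactSupport.of_compactSpace φ)
  have hφgint : Integrable (fun x => φ (g x)) (volume : Measure T2) :=
    hmpg.integrable_comp_of_integrable hφint
  have hsame : ∫ x : T2, φ (g x) = ∫ x : T2, φ x := by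
    have h1 := integral_map (μ := (volume : Measure T2)) hmpg.measurable.aemeasurable
      (f := φ) (hφc.aestronglyMeasurable)
    rw [hmpg.map_eq] at h1
    exact h1.symm
  have hintc : ∫ x : T2, Φ x = c := by
    simp only [hΦeq]
    have hd : Integrable (fun x => φ (g x) - φ x) (volume : Measure T2) := hφgint.sub hφint
    rw [integral_sub (integrable_const c) hd, integral_sub hφgint hφint, hsame]
    simp
  rw [hintc] at hrotv
  obtain ⟨m, hm⟩ := (pr2_eq_zero_iff c).1 hrotv.symm
  let G' : R2 ≃ₜ R2 := shiftH G m
  have hG'l : IsLift G' g := shiftH_lift hGl m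
  have hG'e : Equivariant G' := shiftH_equiv hGe m
  have hHG : ∀ z, H (G' z) = H z := fun z => by
    have h1 := hψc' z
    change H (G z - intVec m) = H z
    rw [equiv_sub hHe, ← hm, ← h1]
    simp only [ψ]; abel
  have hid : ∀ z, G' z = z := by
    intro z
    by_contra hne
    have hε0 := norm_pos_iff.2 (sub_ne_zero.2 hne)
    set ε := ‖G' z - z‖ with hε
    obtain ⟨ρ0, hρ0, hρ0'⟩ := Metric.continuous_iff.1 G'.continuous z (ε / 4) (by positivity)
    have hC0 : 0 ≤ C := (norm_nonneg _).trans (hH 0)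
    set K := 2 * (4 * C + 5) ^ 2 with hK
    have hK0 : 0 < K := by positivity
    set ρ := min ρ0 (min (ε / 4) 1) with hρdef
    have hρpos : 0 < ρ := by positivity
    have hρ1 : ρ ≤ ρ0 := min_le_left _ _
    have hρ2 : ρ ≤ ε / 4 := (min_le_right _ _).trans (min_le_left _ _)
    have hρ3 : ρ ≤ 1 := (min_le_right _ _).trans (min_le_right _ _)
    obtain ⟨n, p, hn, hnp, hnz⟩ := hrig (min (ε / 4) (min (ρ ^ 2 / K) 1)) (by positivity)
      ((min_le_right _ _).trans (min_le_right _ _))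
    have hFn : ∀ z, H ((F ^ n : R2 ≃ₜ R2) z) = H z + (n : ℝ) • ω := fun z => by
      have := drift_zpow hF n z
      simpa using this
    have hP := shiftH_drift hHe hFn p
    have hPl : IsLift (shiftH (F ^ n) p) (f^[n]) := shiftH_lift (fun z => lift_iter hFl n z) p
    have hPe : Equivariant (shiftH (F ^ n) p) := shiftH_equiv (equiv_pow hFe n) p
    have hfin := free_ball_bound (Q := G'.trans (shiftH (F ^ n) p)) hH
      (δ := (n : ℝ) • ω - intVec p)
      (fun y => by
        change H (shiftH (F ^ n) p (G' y)) = _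
        rw [hP, hHG]) (delta_ne hti n hn p) (f^[n] ∘ g)
      ((hmp.iterate n).comp hmpg)
      (fun y => by
        change pr2 (shiftH (F ^ n) p (G' y)) = _
        rw [hPl, hG'l]; rfl)
      (fun y u => by
        change shiftH (F ^ n) p (G' (y + intVec u)) = shiftH (F ^ n) p (G' y) + intVec u
        rw [hG'e, hPe]) z ρ hρpos hρ3
      (by
        intro y hy hy2
        have h1 := hρ0' y (lt_of_lt_of_le hy hρ1)
        rw [dist_eq_norm] at h1
        have h2 := (hnz (G' y)).trans_le (min_le_left _ _)
        have h3 : ‖shiftH (F ^ n) p (G' y) - z‖ < ρ := by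
          rw [← mem_ball_iff_norm]; exact hy2
        have e : G' z - z = (shiftH (F ^ n) p (G' y) - z) - (shiftH (F ^ n) p (G' y) - G' y) -
          (G' y - G' z) := by abel
        have h4 : ε ≤ ‖shiftH (F ^ n) p (G' y) - z‖ + ‖shiftH (F ^ n) p (G' y) - G' y‖ +
            ‖G' y - G' z‖ := by
          rw [hε, e]
          refine (norm_sub_le _ _).trans ?_
          gcongr
          exact norm_sub_le _ _
        linarith)
      (hnp.le.trans ((min_le_right _ _).trans (min_le_right _ _)))
    rw [← hK] at hfin
    have h5 : ‖(n : ℝ) • ω - intVec p‖ < ρ ^ 2 / K :=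
      hnp.trans_le ((min_le_right _ _).trans (min_le_left _ _))
    rw [lt_div_iff₀ hK0] at h5
    linarith
  funext x
  obtain ⟨z, rfl⟩ := pr2_surj x
  rw [← hG'l, hid]
  rfl

/-- **Lemma 4.2.** Let f be a volume-preserving C^r (r ≥ 2, possibly r = ∞) diffeomorphism of
𝕋², isotopic to the identity, regularly semi-conjugate to T_ω̄ with ω̄ totally irrational and
super-Liouvillean. If g is a volume-preserving C^{r−1} diffeomorphism of 𝕋², isotopic to the
identity, commuting with f and with rotation vector ρ(g) = 0, then g = Id. -/
theorem centralizer_with_zero_rotation_vector_is_id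
    (r : ℕ∞) (hr : 2 ≤ r)
    (f g : T2 → T2) (ω : R2) (w : T2)
    (hw : pr2 ω = w)
    (hti : TotallyIrrationalVec ω)
    (hsl : SuperLiouville ω)
    (hiso : IsotopicToId f)
    (hcr : IsCrDiffeo r f)
    (hmp : MeasurePreserving f (volume : Measure T2) volume)
    (hsc : RegSemiConj f w)
    (hisog : IsotopicToId g)
    (hcrg : IsCrDiffeo (r - 1) g)
    (hmpg : MeasurePreserving g (volume : Measure T2) volume)
    (hcomm : g ∘ f = f ∘ g)
    (hρ : IsRotOf g 0) :
    g = id := by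
  exact main_aux r hr f g ω w hw hti hsl hiso hcr hmp hsc hisog hmpg hcomm hρ
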